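/- arXiv:2510.16910 — 2 statements merged into one kernel-verified Lean document; each statement's English description precedes it below -/
import Mathlib

section
/- Let K be a connected compact metric space, φ an isometry of K whose periodic points form a meagre set, w invertible in Lip_α(K) (0 < α ≤ 1), and T f = w·(f∘φ). Then σ(T, Lip_α(K)) is an annulus {λ : r ≤ |λ| ≤ R} or a circle centered at 0, where r = min_{μ ∈ M_φ} exp(∫ ln|w| dμ) and R = max_{μ ∈ M_φ} exp(∫ ln|w| dμ), and M_φ is the set of φ-invariant Borel probability measures on K. -/
open MeasureTheory

/-- Sup norm of a function, as a real supremum. -/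
noncomputable def supNorm {K : Type*} (f : K → ℂ) : ℝ :=
  sSup (Set.range fun x => ‖f x‖)

/-- The norm of the Hölder algebra `Lip_α(K)`. -/
noncomputable def holderNorm {K : Type*} [MetricSpace K] (a : ℝ) (f : K → ℂ) : ℝ :=
  supNorm f + sSup {r : ℝ | ∃ x y : K, x ≠ y ∧ r = ‖f x - f y‖ / dist x y ^ a}

/-- The set of α-Hölder functions on `K`. -/
def HolSet {K : Type*} [MetricSpace K] (a : ℝ) : Set (K → ℂ) :=
  {f | ∃ C : ℝ, ∀ x y : K, ‖f x - f y‖ ≤ C * dist x y ^ a}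

/-- `lam` belongs to the resolvent set of the operator `T` acting on the subalgebra `A`
(with norm `N`): `lam • I - T` maps `A` bijectively onto `A` with a bounded inverse. -/
def InResolvent {K : Type*} (A : Set (K → ℂ)) (N : (K → ℂ) → ℝ)
    (T : (K → ℂ) → (K → ℂ)) (lam : ℂ) : Prop :=
  (∀ f ∈ A, lam • f - T f ∈ A) ∧
  (∀ f ∈ A, lam • f - T f = 0 → f = 0) ∧
  ∃ C > 0, ∀ g ∈ A, ∃ f ∈ A, lam • f - T f = g ∧ N f ≤ C * N g

/-!
For a nonexpansive map `φ` of a compact space the Birkhoff averages of a continuous function are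
equicontinuous, hence converge uniformly to a continuous limit. For `log ‖w‖` the values of this
limit `F` are exactly the integrals against `φ`-invariant probability measures, so on a connected
space the radii `exp (∫ log ‖w‖ ∂μ)` fill the compact interval `range (exp ∘ F)`.

If `‖lam‖` misses this interval, it lies on one side of it, and the Neumann series for `lam⁻¹ • T`
or for `lam • T⁻¹` converges in Hölder norm: its `n`-th weight decays geometrically in sup norm,
and because `φ` is an isometry its Hölder seminorm loses only a factor `n`.

If `‖lam‖ = exp (F x₀)`, choose a nonperiodic `y` close to `x₀`. Along its orbit the sequence
`lam ^ k / ∏ i < k, w (φ^[i] y)` solves the eigenvalue equation exactly and grows or decays slowly,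
so it can be cut off to a finitely supported approximate solution. Spreading that over steep bumps
of disjoint supports, which the isometry carries along the orbit, gives approximate eigenvectors of
`T` in the Hölder norm, so `lam - T` has no bounded inverse.
-/

section

open Filter Topology Function

/-! ### Birkhoff averages of nonexpansive maps -/

section BirkhoffAverage

variable {X E : Type*} [NormedAddCommGroup E] [NormedSpace ℝ E]

theorem norm_birkhoffSum_le {E : Type*} [SeminormedAddCommGroup E] {φ : X → X} {f : X → E} {B : ℝ}
    (hB : ∀ x, ‖f x‖ ≤ B) (n : ℕ) (x : X) : ‖birkhoffSum φ f n x‖ ≤ n * B := by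
  simpa [birkhoffSum] using norm_sum_le_of_le (Finset.range n) fun k _ => hB (φ^[k] x)

theorem birkhoffAverage_mem_of_convex {s : Set E} (hs : Convex ℝ s) {φ : X → X} {f : X → E}
    {n : ℕ} (hn : n ≠ 0) {x : X} (h : ∀ k < n, f (φ^[k] x) ∈ s) :
    birkhoffAverage ℝ φ f n x ∈ s := by
  rw [birkhoffAverage, birkhoffSum, Finset.smul_sum]
  refine hs.sum_mem (fun _ _ => by positivity) ?_ fun k hk => h k (Finset.mem_range.1 hk)
  simp [hn]

theorem birkhoffSum_mul {M : Type*} [AddCommMonoid M] (φ : X → X) (f : X → M) (m n : ℕ) (x : X) :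
    birkhoffSum φ f (m * n) x = birkhoffSum φ^[n] (birkhoffSum φ f n) m x := by
  induction m with
  | zero => simp
  | succ m ih =>
    rw [Nat.succ_mul, birkhoffSum_add, birkhoffSum_succ, ih, ← iterate_mul, mul_comm n]

theorem birkhoffAverage_mul (φ : X → X) (f : X → E) (m n : ℕ) (x : X) :
    birkhoffAverage ℝ φ f (m * n) x = birkhoffAverage ℝ φ^[n] (birkhoffAverage ℝ φ f n) m x := by
  rw [birkhoffAverage, birkhoffSum_mul, Nat.cast_mul, mul_inv, mul_smul]
  simp only [birkhoffAverage, birkhoffSum, Finset.smul_sum]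

theorem dist_birkhoffAverage_mul_le {φ : X → X} {f : X → E} {m n : ℕ} (hm : m ≠ 0) {x : X} {ε : ℝ}
    (h : ∀ j, dist (birkhoffAverage ℝ φ f n (φ^[j] x)) (birkhoffAverage ℝ φ f n x) ≤ ε) :
    dist (birkhoffAverage ℝ φ f (m * n) x) (birkhoffAverage ℝ φ f n x) ≤ ε := by
  rw [birkhoffAverage_mul, ← Metric.mem_closedBall]
  refine birkhoffAverage_mem_of_convex (convex_closedBall _ _) hm fun k _ => ?_
  rw [← iterate_mul]
  exact h _

theorem tendsto_birkhoffAverage_iterate_sub {φ : X → X} {f : X → E}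
    (hf : Bornology.IsBounded (Set.range f)) (j : ℕ) (x : X) :
    Tendsto (fun n => birkhoffAverage ℝ φ f n (φ^[j] x) - birkhoffAverage ℝ φ f n x)
      atTop (𝓝 0) := by
  induction j with
  | zero => simp
  | succ j ih =>
    simpa [iterate_succ_apply'] using
      (tendsto_birkhoffAverage_apply_sub_birkhoffAverage' ℝ hf φ (φ^[j] x)).add ih

variable [PseudoMetricSpace X] [CompactSpace X] {φ : X → X} {f : X → E}

theorem uniformEquicontinuous_birkhoffAverage_of_continuous (hφ : LipschitzWith 1 φ)
    (hf : Continuous f) : UniformEquicontinuous (birkhoffAverage ℝ φ f) :=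
  uniformEquicontinuous_birkhoffAverage ℝ hφ (CompactSpace.uniformContinuous_of_continuous hf)

theorem eventually_forall_dist_birkhoffAverage_iterate_lt (hφ : LipschitzWith 1 φ)
    (hf : Continuous f) (x : X) {ε : ℝ} (hε : 0 < ε) :
    ∀ᶠ n in atTop, ∀ j,
      dist (birkhoffAverage ℝ φ f n (φ^[j] x)) (birkhoffAverage ℝ φ f n x) < ε := by
  obtain ⟨δ, hδ, hequi⟩ := Metric.uniformEquicontinuous_iff.1
    (uniformEquicontinuous_birkhoffAverage_of_continuous hφ hf) (ε / 2) (half_pos hε)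
  have hbdd : TotallyBounded (Set.range fun j => φ^[j] x) :=
    isCompact_univ.totallyBounded.subset (Set.subset_univ _)
  obtain ⟨t, ht_orbit, ht_fin, hcover⟩ :=
    totallyBounded_iff_subset.1 hbdd _ (Metric.dist_mem_uniformity hδ)
  have hnet : ∀ᶠ n in atTop, ∀ p ∈ t,
      dist (birkhoffAverage ℝ φ f n p) (birkhoffAverage ℝ φ f n x) < ε / 2 := by
    refine (eventually_all_finite ht_fin).2 fun p hp => ?_
    obtain ⟨i, rfl⟩ := ht_orbit hp
    have := tendsto_birkhoffAverage_iterate_sub (φ := φ) (isCompact_range hf).isBounded i x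
    simpa [dist_eq_norm] using Metric.tendsto_nhds.1 this (ε / 2) (half_pos hε)
  filter_upwards [hnet] with n hn j
  obtain ⟨p, hp, hjp⟩ := Set.mem_iUnion₂.1 (hcover (Set.mem_range_self j))
  linarith [dist_triangle (birkhoffAverage ℝ φ f n (φ^[j] x)) (birkhoffAverage ℝ φ f n p)
    (birkhoffAverage ℝ φ f n x), hequi _ _ hjp n, hn p hp]

theorem cauchySeq_birkhoffAverage (hφ : LipschitzWith 1 φ) (hf : Continuous f) (x : X) :
    CauchySeq (birkhoffAverage ℝ φ f · x) := by
  refine Metric.cauchySeq_iff.2 fun ε hε => ?_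
  obtain ⟨N, hN⟩ := eventually_atTop.1
    (eventually_forall_dist_birkhoffAverage_iterate_lt hφ hf x (half_pos (half_pos hε)))
  refine ⟨N + 1, fun m hm n hn => ?_⟩
  -- The averages of lengths `m` and `n` are both close to the one of length `m * n`.
  have hmul_n := dist_birkhoffAverage_mul_le (by lia : m ≠ 0) fun j => (hN n (by lia) j).le
  have hmul_m := dist_birkhoffAverage_mul_le (by lia : n ≠ 0) fun j => (hN m (by lia) j).le
  rw [mul_comm] at hmul_m
  linarith [dist_triangle_left (birkhoffAverage ℝ φ f m x) (birkhoffAverage ℝ φ f n x)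
    (birkhoffAverage ℝ φ f (m * n) x)]

/-- The pointwise limit of the Birkhoff averages of `f` along the orbits of `φ`; a junk value
where the averages do not converge. -/
noncomputable def birkhoffLimit {X : Type*} (φ : X → X) (f : X → E) (x : X) : E :=
  limUnder atTop (birkhoffAverage ℝ φ f · x)

variable [CompleteSpace E]

theorem tendsto_birkhoffLimit (hφ : LipschitzWith 1 φ) (hf : Continuous f) (x : X) :
    Tendsto (birkhoffAverage ℝ φ f · x) atTop (𝓝 (birkhoffLimit φ f x)) :=
  (cauchySeq_birkhoffAverage hφ hf x).tendsto_limUnder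

theorem continuous_birkhoffLimit (hφ : LipschitzWith 1 φ) (hf : Continuous f) :
    Continuous (birkhoffLimit φ f) :=
  (tendsto_pi_nhds.2 (tendsto_birkhoffLimit hφ hf)).continuous_of_equicontinuous
    (uniformEquicontinuous_birkhoffAverage_of_continuous hφ hf).equicontinuous

theorem tendstoUniformly_birkhoffLimit (hφ : LipschitzWith 1 φ) (hf : Continuous f) :
    TendstoUniformly (birkhoffAverage ℝ φ f) (birkhoffLimit φ f) atTop :=
  UniformFun.tendsto_iff_tendstoUniformly.1 <|
    ((uniformEquicontinuous_birkhoffAverage_of_continuous hφ hf).equicontinuous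
      |>.tendsto_uniformFun_iff_pi _ _).2 (tendsto_pi_nhds.2 (tendsto_birkhoffLimit hφ hf))

theorem exists_norm_birkhoffSum_sub_le (hφ : LipschitzWith 1 φ) (hf : Continuous f)
    {ε : ℝ} (hε : 0 < ε) :
    ∃ C, ∀ n x, ‖birkhoffSum φ f n x - (n : ℝ) • birkhoffLimit φ f x‖ ≤ ε * n + C := by
  obtain ⟨N, hN⟩ := eventually_atTop.1
    (Metric.tendstoUniformly_iff.1 (tendstoUniformly_birkhoffLimit hφ hf) ε hε)
  obtain ⟨B, hB⟩ := (isCompact_range hf).isBounded.exists_norm_le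
  obtain ⟨B', hB'⟩ := (isCompact_range (continuous_birkhoffLimit hφ hf)).isBounded.exists_norm_le
  rw [Set.forall_mem_range] at hB hB'
  refine ⟨N * |B + B'|, fun n x => ?_⟩
  rcases Nat.eq_zero_or_pos n with rfl | hn
  · simpa using by positivity
  rcases le_or_gt N n with hNn | hnN
  · have hsum : birkhoffSum φ f n x = (n : ℝ) • birkhoffAverage ℝ φ f n x := by
      rw [birkhoffAverage, smul_inv_smul₀ (by positivity)]
    have hclose : ‖birkhoffAverage ℝ φ f n x - birkhoffLimit φ f x‖ ≤ ε := by
      rw [← dist_eq_norm, dist_comm]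
      exact (hN n hNn x).le
    rw [hsum, ← smul_sub, norm_smul, Real.norm_natCast, mul_comm ε]
    have : (n : ℝ) * ‖birkhoffAverage ℝ φ f n x - birkhoffLimit φ f x‖ ≤ n * ε := by gcongr
    have : 0 ≤ N * |B + B'| := by positivity
    linarith
  · calc ‖birkhoffSum φ f n x - (n : ℝ) • birkhoffLimit φ f x‖
      _ ≤ n * B + n * B' := by
        refine norm_sub_le_of_le (norm_birkhoffSum_le hB n x) ?_
        rw [norm_smul, Real.norm_natCast]
        gcongr
        exact hB' x
      _ ≤ n * |B + B'| := by
        rw [← mul_add]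
        gcongr
        exact le_abs_self _
      _ ≤ N * |B + B'| := by gcongr
      _ ≤ ε * n + N * |B + B'| := by simpa using by positivity

theorem exists_birkhoffSum_le_of_birkhoffLimit_lt [Nonempty X] {f : X → ℝ}
    (hφ : LipschitzWith 1 φ) (hf : Continuous f) {c : ℝ} (hc : ∀ x, birkhoffLimit φ f x < c) :
    ∃ ε > 0, ∃ C, ∀ n x, birkhoffSum φ f n x ≤ n * (c - ε) + C := by
  obtain ⟨x₀, -, hx₀⟩ := isCompact_univ.exists_isMaxOn Set.univ_nonempty
    (continuous_birkhoffLimit hφ hf).continuousOn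
  have hε : 0 < (c - birkhoffLimit φ f x₀) / 2 := half_pos (sub_pos.2 (hc x₀))
  obtain ⟨C, hC⟩ := exists_norm_birkhoffSum_sub_le hφ hf hε
  refine ⟨_, hε, C, fun n x => ?_⟩
  have hmax : (n : ℝ) * birkhoffLimit φ f x ≤ n * birkhoffLimit φ f x₀ := by
    gcongr
    exact hx₀ (Set.mem_univ x)
  have hdev := (le_abs_self _).trans (hC n x)
  rw [smul_eq_mul] at hdev
  linarith

theorem exists_le_birkhoffSum_of_lt_birkhoffLimit [Nonempty X] {f : X → ℝ}
    (hφ : LipschitzWith 1 φ) (hf : Continuous f) {c : ℝ} (hc : ∀ x, c < birkhoffLimit φ f x) :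
    ∃ ε > 0, ∃ C, ∀ n x, n * (c + ε) - C ≤ birkhoffSum φ f n x := by
  have hlimit_neg (x : X) : birkhoffLimit φ (-f) x = -birkhoffLimit φ f x := by
    refine tendsto_nhds_unique (tendsto_birkhoffLimit hφ hf.neg x) ?_
    simpa only [birkhoffAverage_neg, Pi.neg_apply] using (tendsto_birkhoffLimit hφ hf x).neg
  obtain ⟨ε, hε, C, hC⟩ := exists_birkhoffSum_le_of_birkhoffLimit_lt (c := -c) hφ hf.neg
    fun x => by simpa [hlimit_neg] using hc x
  refine ⟨ε, hε, C, fun n x => ?_⟩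
  have := hC n x
  rw [birkhoffSum_neg] at this
  linarith

end BirkhoffAverage

/-! ### Invariant measures -/

section InvariantMeasure

theorem integral_birkhoffAverage {X E : Type*} [MeasurableSpace X] [NormedAddCommGroup E]
    [NormedSpace ℝ E] {μ : Measure X} {φ : X → X} (hφ : MeasurePreserving φ μ μ) {f : X → E}
    (hf : Integrable f μ) {n : ℕ} (hn : n ≠ 0) :
    ∫ x, birkhoffAverage ℝ φ f n x ∂μ = ∫ x, f x ∂μ := by
  have hiter (k : ℕ) : ∫ x, f (φ^[k] x) ∂μ = ∫ x, f x ∂μ := by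
    have hk := hφ.iterate k
    have hfk := hk.map_eq ▸ hf.aestronglyMeasurable
    conv_rhs => rw [← hk.map_eq, integral_map hk.aemeasurable hfk]
  simp only [birkhoffAverage, birkhoffSum]
  rw [integral_smul, integral_finsetSum]
  · simp [hiter, ← Nat.cast_smul_eq_nsmul ℝ, hn]
  · exact fun k _ => (hφ.iterate k).integrable_comp_of_integrable hf

theorem exists_integral_eq_birkhoffAverage {X : Type*} [MeasurableSpace X]
    [MeasurableSingletonClass X] (φ : X → X) (x : X) {n : ℕ} (hn : n ≠ 0) :
    ∃ ν : ProbabilityMeasure X, ∀ f : X → ℝ, ∫ t, f t ∂ν = birkhoffAverage ℝ φ f n x := by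
  refine ⟨⟨(n : ENNReal)⁻¹ • ∑ i ∈ Finset.range n, Measure.dirac (φ^[i] x), ⟨?_⟩⟩, fun f => ?_⟩
  · simp [ENNReal.inv_mul_cancel (Nat.cast_ne_zero.2 hn)]
  · simp only [ProbabilityMeasure.coe_mk]
    rw [integral_smul_measure, integral_finsetSum_measure fun i _ => integrable_dirac (by simp)]
    simp [birkhoffAverage, birkhoffSum]

variable {X : Type*} [MetricSpace X] [CompactSpace X] [MeasurableSpace X] [BorelSpace X]
  {φ : X → X}

-- Krylov–Bogoliubov: `μ` is a weak limit of the empirical measures of the orbit of `x`.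
theorem exists_measurePreserving_tendsto_birkhoffAverage (hφ : Continuous φ) (x : X) :
    ∃ μ : Measure X, IsProbabilityMeasure μ ∧ MeasurePreserving φ μ μ ∧
      ∃ l : Filter ℕ, l.NeBot ∧ l ≤ atTop ∧ ∀ f : X → ℝ, Continuous f →
        Tendsto (birkhoffAverage ℝ φ f · x) l (𝓝 (∫ t, f t ∂μ)) := by
  have : Nonempty (ProbabilityMeasure X) := ⟨⟨Measure.dirac x, inferInstance⟩⟩
  choose! ν hν using fun n (hn : n ≠ 0) => exists_integral_eq_birkhoffAverage φ x hn
  let U : Ultrafilter ℕ := Ultrafilter.of atTop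
  have hU : (U : Filter ℕ) ≤ atTop := Ultrafilter.of_le atTop
  let μ : ProbabilityMeasure X := (U.map ν).lim
  have hνμ : Tendsto ν U (𝓝 μ) := (U.map ν).le_nhds_lim
  have hlim (f : X → ℝ) (hf : Continuous f) :
      Tendsto (birkhoffAverage ℝ φ f · x) U (𝓝 (∫ t, f t ∂μ)) := by
    refine (ProbabilityMeasure.tendsto_iff_forall_integral_tendsto.1 hνμ
      (BoundedContinuousFunction.mkOfCompact ⟨f, hf⟩)).congr' ?_
    filter_upwards [hU (eventually_ne_atTop 0)] with n hn using hν n hn f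
  refine ⟨μ, inferInstance, ⟨hφ.measurable, ?_⟩, U, inferInstance, hU, hlim⟩
  have := Measure.isProbabilityMeasure_map (μ := (μ : Measure X)) hφ.aemeasurable
  refine ext_of_forall_integral_eq_of_IsFiniteMeasure fun f => ?_
  rw [integral_map hφ.aemeasurable f.continuous.aestronglyMeasurable]
  have hshift := (tendsto_birkhoffAverage_apply_sub_birkhoffAverage' ℝ f.isBounded_range φ x
    |>.mono_left hU).add (hlim f f.continuous)
  simp only [sub_add_cancel, zero_add] at hshift
  refine tendsto_nhds_unique (hlim _ (f.continuous.comp hφ)) (hshift.congr fun n => ?_)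
  simp only [birkhoffAverage, birkhoffSum, ← iterate_succ_apply, iterate_succ_apply']

theorem integral_birkhoffLimit {E : Type*} [NormedAddCommGroup E] [NormedSpace ℝ E]
    [CompleteSpace E] (hφ : LipschitzWith 1 φ) {μ : Measure X} [IsFiniteMeasure μ]
    (hμ : MeasurePreserving φ μ μ) {f : X → E} (hf : Continuous f) :
    ∫ x, birkhoffLimit φ f x ∂μ = ∫ x, f x ∂μ := by
  have hfi : Integrable f μ :=
    hf.integrable_of_hasCompactSupport (HasCompactSupport.of_compactSpace f)
  obtain ⟨B, hB⟩ := (isCompact_range hf).isBounded.exists_norm_le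
  have hlim : Tendsto (fun n => ∫ x, birkhoffAverage ℝ φ f n x ∂μ) atTop
      (𝓝 (∫ x, birkhoffLimit φ f x ∂μ)) := by
    refine tendsto_integral_filter_of_dominated_convergence (fun _ => B) (.of_forall fun n => ?_)
      ?_ (integrable_const _) (.of_forall (tendsto_birkhoffLimit hφ hf))
    · exact ((uniformEquicontinuous_birkhoffAverage_of_continuous hφ hf).equicontinuous.continuous
        n).aestronglyMeasurable
    · filter_upwards [eventually_ne_atTop 0] with n hn
      refine .of_forall fun x => mem_closedBall_zero_iff.1 <|
        birkhoffAverage_mem_of_convex (convex_closedBall _ _) hn fun k _ => ?_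
      simpa using hB _ (Set.mem_range_self (φ^[k] x))
  refine tendsto_nhds_unique hlim (tendsto_const_nhds.congr' ?_)
  filter_upwards [eventually_ne_atTop 0] with n hn using (integral_birkhoffAverage hμ hfi hn).symm

theorem exists_integral_eq_iff_mem_range_birkhoffLimit [ConnectedSpace X] (hφ : LipschitzWith 1 φ)
    {f : X → ℝ} (hf : Continuous f) (r : ℝ) :
    (∃ μ : Measure X, IsProbabilityMeasure μ ∧ Measure.map φ μ = μ ∧ r = ∫ x, f x ∂μ) ↔
      r ∈ Set.range (birkhoffLimit φ f) := by
  have hcont := continuous_birkhoffLimit hφ hf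
  constructor
  · rintro ⟨μ, _, hμ, rfl⟩
    rw [← integral_birkhoffLimit hφ ⟨hφ.continuous.measurable, hμ⟩ hf]
    exact (isPreconnected_range hcont).ordConnected.convex.integral_mem
      (isCompact_range hcont).isClosed (.of_forall Set.mem_range_self)
      (hcont.integrable_of_hasCompactSupport (HasCompactSupport.of_compactSpace _))
  · rintro ⟨x, rfl⟩
    obtain ⟨μ, hμ, hμφ, l, _, hl, hlim⟩ :=
      exists_measurePreserving_tendsto_birkhoffAverage hφ.continuous x
    exact ⟨μ, hμ, hμφ.map_eq,
      tendsto_nhds_unique ((tendsto_birkhoffLimit hφ hf x).mono_left hl) (hlim f hf)⟩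

end InvariantMeasure

/-! ### Hölder bounds -/

/-- `M` bounds both the sup norm and the `a`-Hölder seminorm of `f`. In contrast to `holderNorm`,
which is a sum of suprema, such a bound can be checked pointwise. -/
structure HolderBound {K : Type*} [MetricSpace K] (a M : ℝ) (f : K → ℂ) : Prop where
  nonneg : 0 ≤ M
  norm_le : ∀ x, ‖f x‖ ≤ M
  norm_sub_le : ∀ x y, ‖f x - f y‖ ≤ M * dist x y ^ a

section HolderBound

variable {K : Type*} [MetricSpace K] {a M N : ℝ} {f g : K → ℂ}

theorem continuous_of_mem_holSet (ha : 0 < a) (hf : f ∈ HolSet a) : Continuous f := by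
  obtain ⟨C, hC⟩ := hf
  refine continuous_iff_continuousAt.2 fun y => tendsto_iff_norm_sub_tendsto_zero.2 ?_
  have hmaj : Continuous fun x => C * dist x y ^ a :=
    continuous_const.mul ((continuous_id.dist continuous_const).rpow_const fun _ => .inr ha.le)
  refine squeeze_zero (fun _ => norm_nonneg _) (fun x => hC x y) ?_
  simpa [ha.ne'] using hmaj.tendsto y

theorem continuous_log_norm_of_mem_holSet (ha : 0 < a) (hf : f ∈ HolSet a) (hf₀ : ∀ x, f x ≠ 0) :
    Continuous fun x => Real.log ‖f x‖ :=
  (continuous_of_mem_holSet ha hf).norm.log fun x => norm_ne_zero_iff.2 (hf₀ x)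

namespace HolderBound

theorem mem_holSet (hf : HolderBound a M f) : f ∈ HolSet a := ⟨M, hf.norm_sub_le⟩

theorem div_le (hf : HolderBound a M f) {x y : K} (hxy : x ≠ y) :
    ‖f x - f y‖ / dist x y ^ a ≤ M := by
  have := dist_pos.2 hxy
  rw [div_le_iff₀ (by positivity)]
  exact hf.norm_sub_le x y

theorem holderNorm_le (hf : HolderBound a M f) : holderNorm a f ≤ 2 * M := by
  rw [holderNorm, two_mul, supNorm]
  refine add_le_add (Real.sSup_le ?_ hf.nonneg) (Real.sSup_le ?_ hf.nonneg)
  · rintro _ ⟨x, rfl⟩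
    exact hf.norm_le x
  · rintro _ ⟨x, y, hxy, rfl⟩
    exact hf.div_le hxy

theorem const (c : ℂ) : HolderBound a ‖c‖ fun _ : K => c where
  nonneg := norm_nonneg c
  norm_le _ := le_rfl
  norm_sub_le x y := by simpa using by positivity

theorem neg (hf : HolderBound a M f) : HolderBound a M fun x => -f x where
  nonneg := hf.nonneg
  norm_le x := by simpa using hf.norm_le x
  norm_sub_le x y := by simpa [neg_add_eq_sub, norm_sub_rev] using hf.norm_sub_le x y

theorem sub (hf : HolderBound a M f) (hg : HolderBound a N g) :
    HolderBound a (M + N) fun x => f x - g x where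
  nonneg := add_nonneg hf.nonneg hg.nonneg
  norm_le x := norm_sub_le_of_le (hf.norm_le x) (hg.norm_le x)
  norm_sub_le x y := by
    rw [sub_sub_sub_comm, add_mul]
    exact norm_sub_le_of_le (hf.norm_sub_le x y) (hg.norm_sub_le x y)

theorem mul (hf : HolderBound a M f) (hg : HolderBound a N g) :
    HolderBound a (2 * M * N) fun x => f x * g x where
  nonneg := by have := hf.nonneg; have := hg.nonneg; positivity
  norm_le x := by
    rw [norm_mul]
    have := mul_le_mul (hf.norm_le x) (hg.norm_le x) (norm_nonneg _) hf.nonneg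
    linarith [mul_nonneg hf.nonneg hg.nonneg]
  norm_sub_le x y :=
    calc ‖f x * g x - f y * g y‖
      _ = ‖f x * (g x - g y) + (f x - f y) * g y‖ := by ring_nf
      _ ≤ ‖f x‖ * ‖g x - g y‖ + ‖f x - f y‖ * ‖g y‖ := by
        simpa only [norm_mul] using norm_add_le (f x * (g x - g y)) ((f x - f y) * g y)
      _ ≤ M * (N * dist x y ^ a) + M * dist x y ^ a * N := by
        have := hf.nonneg
        gcongr
        exacts [hf.norm_le x, hg.norm_sub_le x y, hf.norm_sub_le x y, hg.norm_le y]
      _ = 2 * M * N * dist x y ^ a := by ring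

theorem comp {K' : Type*} [MetricSpace K'] (ha : 0 ≤ a) (hf : HolderBound a M f) {ψ : K' → K}
    (hψ : LipschitzWith 1 ψ) : HolderBound a M fun x => f (ψ x) where
  nonneg := hf.nonneg
  norm_le x := hf.norm_le (ψ x)
  norm_sub_le x y := by
    have hdist : dist (ψ x) (ψ y) ≤ dist x y := by simpa using hψ.dist_le_mul x y
    have := hf.nonneg
    exact (hf.norm_sub_le _ _).trans (by gcongr)

theorem tsum {ι : Type*} {G : ι → K → ℂ} {B : ι → ℝ} (hG : ∀ n, HolderBound a (B n) (G n))
    (hB : Summable B) : HolderBound a (∑' n, B n) fun x => ∑' n, G n x where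
  nonneg := tsum_nonneg fun n => (hG n).nonneg
  norm_le x := tsum_of_norm_bounded hB.hasSum fun n => (hG n).norm_le x
  norm_sub_le x y := by
    have hsum (z : K) : Summable fun n => G n z := .of_norm_bounded hB fun n => (hG n).norm_le z
    rw [← (hsum x).tsum_sub (hsum y), ← tsum_mul_right]
    exact tsum_of_norm_bounded (hB.mul_right _).hasSum fun n => (hG n).norm_sub_le x y

variable [CompactSpace K]

theorem exists_of_mem_holSet (ha : 0 < a) (hf : f ∈ HolSet a) : ∃ M, HolderBound a M f := by
  obtain ⟨B, hB⟩ := (isCompact_range (continuous_of_mem_holSet ha hf)).isBounded.exists_norm_le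
  obtain ⟨C, hC⟩ := hf
  refine ⟨max (max B C) 0, le_max_right _ _, fun x => ?_, fun x y => (hC x y).trans ?_⟩
  · exact (hB _ (Set.mem_range_self x)).trans ((le_max_left _ _).trans (le_max_left _ _))
  · gcongr
    exact (le_max_right _ _).trans (le_max_left _ _)

theorem of_mem_holSet (ha : 0 < a) (hf : f ∈ HolSet a) : HolderBound a (holderNorm a f) f := by
  obtain ⟨M, hM⟩ := exists_of_mem_holSet ha hf
  have hsup : 0 ≤ supNorm f := Real.sSup_nonneg (by rintro _ ⟨x, rfl⟩; positivity)
  have hquot : 0 ≤ sSup {r : ℝ | ∃ x y : K, x ≠ y ∧ r = ‖f x - f y‖ / dist x y ^ a} :=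
    Real.sSup_nonneg (by rintro _ ⟨x, y, -, rfl⟩; positivity)
  refine ⟨add_nonneg hsup hquot, fun x => ?_, fun x y => ?_⟩
  · refine le_add_of_le_of_nonneg (le_csSup ⟨M, ?_⟩ (Set.mem_range_self x)) hquot
    rintro _ ⟨z, rfl⟩
    exact hM.norm_le z
  · rcases eq_or_ne x y with rfl | hxy
    · simp [ha.ne']
    have := dist_pos.2 hxy
    rw [← div_le_iff₀ (by positivity)]
    refine le_add_of_nonneg_of_le hsup (le_csSup ⟨M, ?_⟩ ⟨x, y, hxy, rfl⟩)
    rintro _ ⟨z, z', hz, rfl⟩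
    exact hM.div_le hz

end HolderBound

end HolderBound

/-! ### Weighted composition operators and the Neumann series -/

/-- The weighted composition operator `f ↦ w · (f ∘ φ)`. -/
def weightedComp {K : Type*} (w : K → ℂ) (φ : K → K) (f : K → ℂ) : K → ℂ :=
  fun t => w t * f (φ t)

/-- The multiplicative cocycle `w · (w ∘ φ) ⋯ (w ∘ φⁿ⁻¹)`, which is the weight of the `n`-th power
of `weightedComp w φ`. -/
def cocycle {K : Type*} (w : K → ℂ) (φ : K → K) (n : ℕ) (x : K) : ℂ :=
  ∏ i ∈ Finset.range n, w (φ^[i] x)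

section Cocycle

variable {K : Type*} {w : K → ℂ} {φ : K → K}

@[simp]
theorem cocycle_zero (x : K) : cocycle w φ 0 x = 1 := Finset.prod_range_zero _

theorem cocycle_succ (n : ℕ) (x : K) :
    cocycle w φ (n + 1) x = cocycle w φ n x * w (φ^[n] x) :=
  Finset.prod_range_succ _ _

theorem cocycle_succ' (n : ℕ) (x : K) : cocycle w φ (n + 1) x = w x * cocycle w φ n (φ x) := by
  simp only [cocycle, Finset.prod_range_succ', iterate_succ_apply, iterate_zero_apply, mul_comm]

theorem cocycle_ne_zero (hw : ∀ x, w x ≠ 0) (n : ℕ) (x : K) : cocycle w φ n x ≠ 0 :=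
  Finset.prod_ne_zero_iff.2 fun _ _ => hw _

theorem cocycle_const_mul (c : ℂ) (n : ℕ) (x : K) :
    cocycle (fun t => c * w t) φ n x = c ^ n * cocycle w φ n x := by
  simp [cocycle, Finset.prod_mul_distrib]

theorem norm_cocycle (hw : ∀ x, w x ≠ 0) (n : ℕ) (x : K) :
    ‖cocycle w φ n x‖ = Real.exp (birkhoffSum φ (fun t => Real.log ‖w t‖) n x) := by
  simp [cocycle, birkhoffSum, Real.exp_sum, Real.exp_log (norm_pos_iff.2 (hw _))]

theorem cocycle_symm_mul_cocycle (hw : ∀ x, w x ≠ 0) (θ : K ≃ K) (n : ℕ) (x : K) :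
    cocycle (fun t => (w (θ.symm t))⁻¹) θ.symm n x * cocycle w θ n (θ.symm^[n] x) = 1 := by
  induction n with
  | zero => simp
  | succ n ih =>
    rw [cocycle_succ, cocycle_succ', iterate_succ_apply', θ.apply_symm_apply,
      mul_assoc, inv_mul_cancel_left₀ (hw _), ih]

theorem weightedComp_weightedComp_symm (hw : ∀ x, w x ≠ 0) (θ : K ≃ K) (g : K → ℂ) :
    weightedComp w θ (weightedComp (fun t => (w (θ.symm t))⁻¹) θ.symm g) = g := by
  funext t
  simp [weightedComp, hw]

theorem eq_zero_of_weightedComp_eq_zero (hw : ∀ x, w x ≠ 0) (hφ : Surjective φ) {f : K → ℂ}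
    (hf : weightedComp w φ f = 0) : f = 0 := by
  funext y
  obtain ⟨x, rfl⟩ := hφ y
  simpa [weightedComp, hw] using congrFun hf x

theorem eq_cocycle_mul_of_eq_weightedComp {f : K → ℂ} (hf : f = weightedComp w φ f)
    (n : ℕ) (x : K) : f x = cocycle w φ n x * f (φ^[n] x) := by
  induction n with
  | zero => simp
  | succ n ih =>
    rw [cocycle_succ, iterate_succ_apply', mul_assoc, ih]
    exact congrArg _ (congrFun hf _)

theorem eq_zero_of_eq_weightedComp {C ρ M : ℝ} (hρ₀ : 0 ≤ ρ) (hρ₁ : ρ < 1)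
    (hw : ∀ n x, ‖cocycle w φ n x‖ ≤ C * ρ ^ n) {f : K → ℂ} (hM : ∀ x, ‖f x‖ ≤ M)
    (hf : f = weightedComp w φ f) : f = 0 := by
  funext x
  have hle (n : ℕ) : ‖f x‖ ≤ C * ρ ^ n * M := by
    rw [eq_cocycle_mul_of_eq_weightedComp hf n x, norm_mul]
    exact mul_le_mul (hw n x) (hM _) (norm_nonneg _) ((norm_nonneg _).trans (hw n x))
  have hlim : Tendsto (fun n => C * ρ ^ n * M) atTop (𝓝 (C * 0 * M)) :=
    ((tendsto_pow_atTop_nhds_zero_of_lt_one hρ₀ hρ₁).const_mul C).mul_const M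
  simpa using ge_of_tendsto' hlim hle

end Cocycle

section Neumann

variable {K : Type*} [MetricSpace K] {a C V ρ : ℝ} {v : K → ℂ} {ψ : K → K}

-- The trailing factor makes the telescoping work without dividing by the cocycle.
theorem norm_cocycle_sub_mul_cocycle_le (ha : 0 ≤ a) (hψ : LipschitzWith 1 ψ)
    (hv : HolderBound a V v) (hC : 0 ≤ C) (hρ : 0 < ρ)
    (hbound : ∀ n x, ‖cocycle v ψ n x‖ ≤ C * ρ ^ n) (x y : K) (n m : ℕ) :
    ‖(cocycle v ψ n x - cocycle v ψ n y) * cocycle v ψ m (ψ^[n] y)‖ ≤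
      n * (C * C * V / ρ) * ρ ^ (n + m) * dist x y ^ a := by
  induction n generalizing m with
  | zero => simp
  | succ n ih =>
    have htelescope : (cocycle v ψ (n + 1) x - cocycle v ψ (n + 1) y) *
          cocycle v ψ m (ψ^[n + 1] y) =
        cocycle v ψ n x * (v (ψ^[n] x) - v (ψ^[n] y)) * cocycle v ψ m (ψ^[n + 1] y) +
        (cocycle v ψ n x - cocycle v ψ n y) * cocycle v ψ (m + 1) (ψ^[n] y) := by
      rw [cocycle_succ, cocycle_succ, cocycle_succ', ← iterate_succ_apply' ψ]
      ring
    have hstep : ‖cocycle v ψ n x * (v (ψ^[n] x) - v (ψ^[n] y)) * cocycle v ψ m (ψ^[n + 1] y)‖ ≤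
        C * ρ ^ n * (V * dist x y ^ a) * (C * ρ ^ m) := by
      have := hv.nonneg
      rw [norm_mul, norm_mul]
      gcongr
      exacts [hbound n x, (hv.comp ha (by simpa using hψ.iterate n)).norm_sub_le x y, hbound m _]
    calc ‖(cocycle v ψ (n + 1) x - cocycle v ψ (n + 1) y) * cocycle v ψ m (ψ^[n + 1] y)‖
      _ ≤ C * ρ ^ n * (V * dist x y ^ a) * (C * ρ ^ m) +
          n * (C * C * V / ρ) * ρ ^ (n + (m + 1)) * dist x y ^ a := by
        rw [htelescope]
        exact norm_add_le_of_le hstep (ih (m + 1))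
      _ = (n + 1 : ℕ) * (C * C * V / ρ) * ρ ^ (n + 1 + m) * dist x y ^ a := by
        push_cast
        field_simp
        ring

theorem HolderBound.cocycle (ha : 0 ≤ a) (hψ : LipschitzWith 1 ψ) (hv : HolderBound a V v)
    (hC : 0 ≤ C) (hρ : 0 < ρ) (hbound : ∀ n x, ‖cocycle v ψ n x‖ ≤ C * ρ ^ n) (n : ℕ) :
    HolderBound a (C * ρ ^ n + C * C * V / ρ * (n * ρ ^ n)) (cocycle v ψ n) := by
  have := hv.nonneg
  refine ⟨by positivity, fun x => (hbound n x).trans (by simpa using by positivity),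
    fun x y => ?_⟩
  have hdiff := norm_cocycle_sub_mul_cocycle_le ha hψ hv hC hρ hbound x y n 0
  simp only [cocycle_zero, mul_one, add_zero] at hdiff
  have : 0 ≤ C * ρ ^ n * dist x y ^ a := by positivity
  linarith

theorem exists_neumann_series (ha : 0 ≤ a) (hψ : LipschitzWith 1 ψ) (hv : HolderBound a V v)
    (hC : 0 ≤ C) (hρ₀ : 0 < ρ) (hρ₁ : ρ < 1) (hbound : ∀ n x, ‖cocycle v ψ n x‖ ≤ C * ρ ^ n) :
    ∃ D, ∀ g M, HolderBound a M g → ∃ f, HolderBound a (D * M) f ∧ f - weightedComp v ψ f = g := by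
  have hsummable : Summable fun n : ℕ => C * ρ ^ n + C * C * V / ρ * (n * ρ ^ n) := by
    refine .add (.mul_left _ (summable_geometric_of_lt_one hρ₀.le hρ₁)) (.mul_left _ ?_)
    simpa using summable_pow_mul_geometric_of_norm_lt_one 1 (r := ρ) (by simpa [abs_of_pos hρ₀])
  refine ⟨∑' n : ℕ, 2 * (C * ρ ^ n + C * C * V / ρ * (n * ρ ^ n)), fun g M hg => ?_⟩
  have hterm (n : ℕ) : HolderBound a (2 * (C * ρ ^ n + C * C * V / ρ * (n * ρ ^ n)) * M)
      fun x => cocycle v ψ n x * g (ψ^[n] x) :=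
    (HolderBound.cocycle ha hψ hv hC hρ₀ hbound n).mul
      (hg.comp ha (by simpa using hψ.iterate n))
  have hB := (hsummable.mul_left 2).mul_right M
  refine ⟨fun x => ∑' n, cocycle v ψ n x * g (ψ^[n] x), ?_, funext fun x => ?_⟩
  · rw [← tsum_mul_right]
    exact .tsum hterm hB
  · have hsum : Summable fun n => cocycle v ψ n x * g (ψ^[n] x) :=
      .of_norm_bounded hB fun n => (hterm n).norm_le x
    simp only [Pi.sub_apply, weightedComp]
    rw [hsum.tsum_eq_zero_add, ← tsum_mul_left]
    simp [cocycle_succ', mul_assoc]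

end Neumann

section Resolvent

variable {K : Type*} [MetricSpace K] [CompactSpace K] {a C ρ : ℝ} {v u w : K → ℂ} {ψ φ : K → K}

theorem weightedComp_mem_holSet (ha : 0 < a) (hw : w ∈ HolSet a) (hφ : LipschitzWith 1 φ)
    {f : K → ℂ} (hf : f ∈ HolSet a) : weightedComp w φ f ∈ HolSet a :=
  ((HolderBound.of_mem_holSet ha hw).mul
    ((HolderBound.of_mem_holSet ha hf).comp ha.le hφ)).mem_holSet

theorem holderNorm_weightedComp_le (ha : 0 < a) (hw : w ∈ HolSet a) (hφ : LipschitzWith 1 φ)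
    {f : K → ℂ} (hf : f ∈ HolSet a) :
    holderNorm a (weightedComp w φ f) ≤ 4 * holderNorm a w * holderNorm a f := by
  refine (((HolderBound.of_mem_holSet ha hw).mul
    ((HolderBound.of_mem_holSet ha hf).comp ha.le hφ)).holderNorm_le).trans_eq ?_
  ring

theorem smul_sub_weightedComp_mem_holSet (ha : 0 < a) (hw : w ∈ HolSet a) (hφ : LipschitzWith 1 φ)
    (lam : ℂ) {f : K → ℂ} (hf : f ∈ HolSet a) : lam • f - weightedComp w φ f ∈ HolSet a :=
  (((HolderBound.const lam).mul (.of_mem_holSet ha hf)).sub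
    (.of_mem_holSet ha (weightedComp_mem_holSet ha hw hφ hf))).mem_holSet

theorem inResolvent_one_of_norm_cocycle_le (ha : 0 < a) (hψ : LipschitzWith 1 ψ)
    (hv : v ∈ HolSet a) (hC : 0 ≤ C) (hρ₀ : 0 < ρ) (hρ₁ : ρ < 1)
    (hbound : ∀ n x, ‖cocycle v ψ n x‖ ≤ C * ρ ^ n) :
    InResolvent (HolSet a) (holderNorm a) (weightedComp v ψ) 1 := by
  refine ⟨fun f hf => smul_sub_weightedComp_mem_holSet ha hv hψ 1 hf, fun f hf h => ?_, ?_⟩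
  · rw [one_smul, sub_eq_zero] at h
    exact eq_zero_of_eq_weightedComp hρ₀.le hρ₁ hbound
      (HolderBound.of_mem_holSet ha hf).norm_le h
  · obtain ⟨D, hD⟩ := exists_neumann_series ha.le hψ (.of_mem_holSet ha hv) hC hρ₀ hρ₁ hbound
    refine ⟨2 * |D| + 1, by positivity, fun g hg => ?_⟩
    have hg := HolderBound.of_mem_holSet ha hg
    obtain ⟨f, hf, hfg⟩ := hD g _ hg
    refine ⟨f, hf.mem_holSet, by rw [one_smul, hfg], hf.holderNorm_le.trans ?_⟩
    nlinarith [le_abs_self D, hg.nonneg]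

theorem inResolvent_of_factor (ha : 0 < a) (hw : w ∈ HolSet a) (hφ : LipschitzWith 1 φ) {lam : ℂ}
    (θ : K ≃ᵢ K) (hu : ∀ t, u t ≠ 0) (huinv : (fun t => (u t)⁻¹) ∈ HolSet a)
    (hfactor : ∀ f, lam • f - weightedComp w φ f = weightedComp u θ (f - weightedComp v ψ f))
    (hv : InResolvent (HolSet a) (holderNorm a) (weightedComp v ψ) 1) :
    InResolvent (HolSet a) (holderNorm a) (weightedComp w φ) lam := by
  have hθ : LipschitzWith 1 θ.symm := θ.symm.isometry.lipschitz
  have huinv' : (fun t => (u (θ.symm t))⁻¹) ∈ HolSet a :=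
    ((HolderBound.of_mem_holSet ha huinv).comp ha.le hθ).mem_holSet
  obtain ⟨-, hinj, Q, hQ, hsurj⟩ := hv
  simp only [one_smul] at hinj hsurj
  refine ⟨fun f hf => smul_sub_weightedComp_mem_holSet ha hw hφ lam hf, fun f hf h => ?_, ?_⟩
  · exact hinj f hf (eq_zero_of_weightedComp_eq_zero hu θ.surjective ((hfactor f).symm.trans h))
  · let P := 4 * holderNorm a fun t => (u (θ.symm t))⁻¹
    have hP : 0 ≤ P := mul_nonneg zero_le_four (HolderBound.of_mem_holSet ha huinv').nonneg
    refine ⟨Q * (P + 1), by positivity, fun g hg => ?_⟩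
    obtain ⟨f, hf, hfg, hfN⟩ := hsurj _ (weightedComp_mem_holSet ha huinv' hθ hg)
    refine ⟨f, hf, ?_, hfN.trans ?_⟩
    · rw [hfactor, hfg]
      exact weightedComp_weightedComp_symm hu θ.toEquiv g
    · rw [mul_assoc]
      gcongr
      linarith [holderNorm_weightedComp_le ha huinv' hθ hg,
        (HolderBound.of_mem_holSet ha hg).nonneg]

end Resolvent

section ResolventOutsideAnnulus

variable {K : Type*} [MetricSpace K] [CompactSpace K] {a : ℝ} {w : K → ℂ} {φ : K ≃ᵢ K} {lam : ℂ}

theorem inResolvent_of_norm_cocycle_le (ha : 0 < a) (hw : w ∈ HolSet a) (hlam : lam ≠ 0)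
    {C ρ : ℝ} (hC : 0 ≤ C) (hρ₀ : 0 < ρ) (hρ₁ : ρ < 1)
    (hbound : ∀ n x, ‖cocycle w φ n x‖ ≤ C * ρ ^ n * ‖lam‖ ^ n) :
    InResolvent (HolSet a) (holderNorm a) (weightedComp w φ) lam := by
  have hφ : LipschitzWith 1 φ := φ.isometry.lipschitz
  refine inResolvent_of_factor (u := fun _ => lam) (v := fun t => lam⁻¹ * w t) ha hw hφ
    (IsometryEquiv.refl K) (fun _ => hlam) (HolderBound.const _).mem_holSet (fun f => ?_)
    (inResolvent_one_of_norm_cocycle_le ha hφ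
      ((HolderBound.const _).mul (.of_mem_holSet ha hw)).mem_holSet hC hρ₀ hρ₁ fun n x => ?_)
  · funext t
    change lam * f t - w t * f (φ t) = lam * (f t - lam⁻¹ * w t * f (φ t))
    rw [mul_sub, mul_assoc, mul_inv_cancel_left₀ hlam]
  · rw [cocycle_const_mul, norm_mul, norm_pow, norm_inv, inv_pow, inv_mul_le_iff₀' (by positivity)]
    exact hbound n x

theorem inResolvent_of_le_norm_cocycle (ha : 0 < a) (hw : w ∈ HolSet a) (hw₀ : ∀ t, w t ≠ 0)
    (hwinv : (fun t => (w t)⁻¹) ∈ HolSet a) {C ρ : ℝ} (hC : 0 ≤ C) (hρ₀ : 0 < ρ) (hρ₁ : ρ < 1)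
    (hbound : ∀ n x, ‖lam‖ ^ n ≤ C * ρ ^ n * ‖cocycle w φ n x‖) :
    InResolvent (HolSet a) (holderNorm a) (weightedComp w φ) lam := by
  have hφ : LipschitzWith 1 φ := φ.isometry.lipschitz
  have hφsymm : LipschitzWith 1 φ.symm := φ.symm.isometry.lipschitz
  refine inResolvent_of_factor (u := fun t => -w t) (v := fun t => lam * (w (φ.symm t))⁻¹)
    ha hw hφ φ (fun t => neg_ne_zero.2 (hw₀ t)) ?_ (fun f => ?_)
    (inResolvent_one_of_norm_cocycle_le ha hφsymm ?_ hC hρ₀ hρ₁ fun n x => ?_)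
  · simpa only [inv_neg] using (HolderBound.of_mem_holSet ha hwinv).neg.mem_holSet
  · funext t
    simp only [weightedComp, Pi.sub_apply, Pi.smul_apply, smul_eq_mul, φ.symm_apply_apply]
    field_simp [hw₀ t]
    ring
  · exact ((HolderBound.const lam).mul ((HolderBound.of_mem_holSet ha hwinv).comp ha.le
      hφsymm)).mem_holSet
  · have hpos : 0 < ‖cocycle w φ n (φ.symm^[n] x)‖ := norm_pos_iff.2 (cocycle_ne_zero hw₀ _ _)
    have hcancel := congrArg norm (cocycle_symm_mul_cocycle hw₀ φ.toEquiv n x)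
    rw [norm_mul, norm_one] at hcancel
    rw [cocycle_const_mul, norm_mul, norm_pow]
    refine le_of_mul_le_mul_right ?_ hpos
    refine Eq.trans_le ?_ (hbound n (φ.symm^[n] x))
    rw [mul_assoc]
    exact (congrArg _ hcancel).trans (mul_one _)

variable [Nonempty K]

theorem inResolvent_of_exp_birkhoffLimit_lt (ha : 0 < a) (hw : w ∈ HolSet a) (hw₀ : ∀ t, w t ≠ 0)
    (hlam : ∀ x, Real.exp (birkhoffLimit φ (fun t => Real.log ‖w t‖) x) < ‖lam‖) :
    InResolvent (HolSet a) (holderNorm a) (weightedComp w φ) lam := by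
  have hpos : 0 < ‖lam‖ := (Real.exp_pos _).trans (hlam (Classical.arbitrary K))
  obtain ⟨ε, hε, C, hC⟩ := exists_birkhoffSum_le_of_birkhoffLimit_lt φ.isometry.lipschitz
    (continuous_log_norm_of_mem_holSet ha hw hw₀) fun x => (Real.lt_log_iff_exp_lt hpos).2 (hlam x)
  refine inResolvent_of_norm_cocycle_le ha hw (norm_pos_iff.1 hpos) (Real.exp_pos C).le
    (Real.exp_pos (-ε)) (Real.exp_lt_one_iff.2 (neg_neg_iff_pos.2 hε)) fun n x => ?_
  calc ‖cocycle w φ n x‖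
    _ ≤ Real.exp (n * (Real.log ‖lam‖ - ε) + C) := by
      rw [norm_cocycle hw₀]
      exact Real.exp_le_exp.2 (hC n x)
    _ = Real.exp C * Real.exp (-ε) ^ n * Real.exp (Real.log ‖lam‖) ^ n := by
      rw [← Real.exp_nat_mul, ← Real.exp_nat_mul, ← Real.exp_add, ← Real.exp_add]
      ring_nf
    _ = Real.exp C * Real.exp (-ε) ^ n * ‖lam‖ ^ n := by rw [Real.exp_log hpos]

theorem inResolvent_of_lt_exp_birkhoffLimit (ha : 0 < a) (hw : w ∈ HolSet a) (hw₀ : ∀ t, w t ≠ 0)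
    (hwinv : (fun t => (w t)⁻¹) ∈ HolSet a)
    (hlam : ∀ x, ‖lam‖ < Real.exp (birkhoffLimit φ (fun t => Real.log ‖w t‖) x)) :
    InResolvent (HolSet a) (holderNorm a) (weightedComp w φ) lam := by
  have hφ : LipschitzWith 1 φ := φ.isometry.lipschitz
  have hlog := continuous_log_norm_of_mem_holSet ha hw hw₀
  obtain ⟨x₀, -, hx₀⟩ := isCompact_univ.exists_isMinOn Set.univ_nonempty
    (continuous_birkhoffLimit hφ hlog).continuousOn
  -- A radius `l` above `‖lam‖` is needed because `lam` may vanish.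
  obtain ⟨l, hl, hlx₀⟩ := exists_between (hlam x₀)
  have hpos : 0 < l := (norm_nonneg lam).trans_lt hl
  obtain ⟨ε, hε, C, hC⟩ := exists_le_birkhoffSum_of_lt_birkhoffLimit (c := Real.log l) hφ hlog
    fun x => ((Real.log_lt_iff_lt_exp hpos).2 hlx₀).trans_le (hx₀ (Set.mem_univ x))
  refine inResolvent_of_le_norm_cocycle ha hw hw₀ hwinv (Real.exp_pos C).le
    (Real.exp_pos (-ε)) (Real.exp_lt_one_iff.2 (neg_neg_iff_pos.2 hε)) fun n x => ?_
  calc ‖lam‖ ^ n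
    _ ≤ Real.exp (Real.log l) ^ n := by
      rw [Real.exp_log hpos]
      gcongr
    _ = Real.exp C * Real.exp (-ε) ^ n * Real.exp (n * (Real.log l + ε) - C) := by
      rw [← Real.exp_nat_mul, ← Real.exp_nat_mul, ← Real.exp_add, ← Real.exp_add]
      ring_nf
    _ ≤ Real.exp C * Real.exp (-ε) ^ n * ‖cocycle w φ n x‖ := by
      rw [norm_cocycle hw₀]
      gcongr
      exact hC n x

end ResolventOutsideAnnulus

/-! ### Quasimodes of weighted shifts -/

/-- `F`, supported strictly between `0` and `n` and of sup norm `1`, satisfies the eigenvalue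
equation `lam * F k = u k * F (k + 1)` of the weighted backward shift up to an error `η`. -/
structure IsShiftQuasimode (u : ℕ → ℂ) (lam : ℂ) (η : ℝ) (n : ℕ) (F : ℕ → ℂ) : Prop where
  zero_eq : F 0 = 0
  last_eq : F n = 0
  norm_le_one : ∀ k ≤ n, ‖F k‖ ≤ 1
  exists_norm_eq_one : ∃ k < n, ‖F k‖ = 1
  norm_residual_le : ∀ k < n, ‖lam * F k - u k * F (k + 1)‖ ≤ η

/-- The exponential tent `exp (ε * (L - |k - L|))`: equal to `1` at `0` and `2 * L`, with its peak
at `L`, and varying by a factor of at most `exp ε` in each step. -/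
noncomputable def expTent (ε : ℝ) (L k : ℕ) : ℝ := Real.exp (ε * (L - |(k : ℝ) - L|))

section ShiftQuasimode

variable {u F α : ℕ → ℂ} {lam : ℂ} {ε η C : ℝ}

theorem IsShiftQuasimode.of_forall_norm_le {n k₀ : ℕ} (hzero : F 0 = 0) (hlast : F n = 0)
    (hk₀ : k₀ ≤ n) (hne : F k₀ ≠ 0) (hmax : ∀ k ≤ n, ‖F k‖ ≤ ‖F k₀‖)
    (hres : ∀ k < n, ‖lam * F k - u k * F (k + 1)‖ ≤ η * ‖F k₀‖) :
    IsShiftQuasimode u lam η n fun k => F k / F k₀ where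
  zero_eq := by simp [hzero]
  last_eq := by simp [hlast]
  norm_le_one k hk := by
    rw [norm_div]
    exact div_le_one_of_le₀ (hmax k hk) (norm_nonneg _)
  exists_norm_eq_one := by
    refine ⟨k₀, hk₀.lt_of_ne fun h => hne (h ▸ hlast), ?_⟩
    rw [div_self hne, norm_one]
  norm_residual_le k hk := by
    rw [← mul_div_assoc, ← mul_div_assoc, ← sub_div, norm_div, div_le_iff₀ (norm_pos_iff.2 hne)]
    exact hres k hk

theorem expTent_zero (L : ℕ) : expTent ε L 0 = 1 := by simp [expTent]

theorem expTent_self (L : ℕ) : expTent ε L L = Real.exp (ε * L) := by simp [expTent]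

theorem expTent_two_mul (L : ℕ) : expTent ε L (2 * L) = 1 := by
  simp [expTent, two_mul]

theorem one_le_expTent (hε : 0 ≤ ε) {L k : ℕ} (hk : k ≤ 2 * L) : 1 ≤ expTent ε L k := by
  have hkL : (k : ℝ) ≤ 2 * L := by exact_mod_cast hk
  have habs : |(k : ℝ) - L| ≤ L :=
    abs_le.2 ⟨by linarith [Nat.cast_nonneg (α := ℝ) k], by linarith⟩
  exact Real.one_le_exp (mul_nonneg hε (sub_nonneg.2 habs))

theorem abs_expTent_sub_expTent_succ_le (hε₀ : 0 ≤ ε) (hε₁ : ε ≤ 1) (L k : ℕ) :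
    |expTent ε L k - expTent ε L (k + 1)| ≤ 2 * ε * expTent ε L k := by
  let t := ε * (|(k : ℝ) - L| - |((k + 1 : ℕ) : ℝ) - L|)
  have ht : |t| ≤ ε := by
    have hlip := abs_abs_sub_abs_le ((k : ℝ) - L) (((k + 1 : ℕ) : ℝ) - L)
    rw [sub_sub_sub_cancel_right, Nat.cast_succ, sub_add_cancel_left, abs_neg, abs_one] at hlip
    rw [abs_mul, abs_of_nonneg hε₀]
    exact mul_le_of_le_one_right hε₀ (by simpa using hlip)
  have hsucc : expTent ε L (k + 1) = expTent ε L k * Real.exp t := by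
    rw [expTent, expTent, ← Real.exp_add]
    congr 1
    ring
  have hpos : 0 < expTent ε L k := Real.exp_pos _
  calc |expTent ε L k - expTent ε L (k + 1)|
    _ = expTent ε L k * |Real.exp t - 1| := by
      rw [hsucc, ← abs_of_pos hpos, ← abs_mul, abs_of_pos hpos, abs_sub_comm, mul_sub_one]
    _ ≤ expTent ε L k * (2 * ε) := by
      gcongr
      exact (Real.abs_exp_sub_one_le (ht.trans hε₁)).trans (by gcongr)
    _ = 2 * ε * expTent ε L k := mul_comm _ _

theorem exists_norm_le_expTent_sub_one_mul_norm (hε : 0 < ε)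
    (hlower : ∀ k : ℕ, Real.exp (-(ε / 8 * k + C)) ≤ ‖α k‖)
    (hupper : ∀ k : ℕ, ‖α k‖ ≤ Real.exp (ε / 8 * k + C)) :
    ∃ L, ∀ k ≤ 2 * L, ‖α k‖ ≤ (expTent ε L L - 1) * ‖α L‖ := by
  have hC : 0 ≤ C := by
    have := Real.exp_le_exp.1 ((hlower 0).trans (hupper 0))
    simp only [Nat.cast_zero, mul_zero, zero_add] at this
    linarith
  obtain ⟨L, hL⟩ := exists_nat_ge ((4 * C + 2) / ε)
  rw [div_le_iff₀' hε] at hL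
  have hpeak : Real.exp (3 * (ε * L) / 8 + 2 * C) ≤ expTent ε L L - 1 := by
    have hone : 1 ≤ Real.exp (3 * (ε * L) / 8 + 2 * C) := Real.one_le_exp (by positivity)
    have htwo : 2 ≤ Real.exp (ε * L - (3 * (ε * L) / 8 + 2 * C)) := by
      linarith [Real.add_one_le_exp (ε * L - (3 * (ε * L) / 8 + 2 * C))]
    have hsplit := Real.exp_add (3 * (ε * L) / 8 + 2 * C) (ε * L - (3 * (ε * L) / 8 + 2 * C))
    rw [add_sub_cancel] at hsplit
    rw [expTent_self, hsplit]
    nlinarith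
  refine ⟨L, fun k hk => ?_⟩
  have hkL : (k : ℝ) ≤ 2 * L := by exact_mod_cast hk
  calc ‖α k‖
    _ ≤ Real.exp (ε / 8 * k + C) := hupper k
    _ ≤ Real.exp (3 * (ε * L) / 8 + 2 * C) * Real.exp (-(ε / 8 * L + C)) := by
      rw [← Real.exp_add]
      exact Real.exp_le_exp.2 (by linarith [mul_le_mul_of_nonneg_left hkL hε.le])
    _ ≤ (expTent ε L L - 1) * ‖α L‖ :=
      mul_le_mul hpeak (hlower L) (Real.exp_pos _).le ((Real.exp_pos _).le.trans hpeak)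

-- The exact solution `α` is cut off by `expTent ε L k - 1`. At the peak this factor beats the
-- subexponential oscillation of `α`, so subtracting `1` does not spoil the relative error.
theorem exists_isShiftQuasimode (hα : ∀ k, u k * α (k + 1) = lam * α k) (hε₀ : 0 < ε)
    (hε₁ : ε ≤ 1) (hlower : ∀ k : ℕ, Real.exp (-(ε / 8 * k + C)) ≤ ‖α k‖)
    (hupper : ∀ k : ℕ, ‖α k‖ ≤ Real.exp (ε / 8 * k + C)) :
    ∃ n F, IsShiftQuasimode u lam (4 * ε * ‖lam‖) n F := by
  obtain ⟨L, hL⟩ := exists_norm_le_expTent_sub_one_mul_norm hε₀ hlower hupper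
  let e := expTent ε L
  let F : ℕ → ℂ := fun k => ((e k - 1 : ℝ) : ℂ) * α k
  have hF {k : ℕ} (hk : k ≤ 2 * L) : ‖F k‖ = (e k - 1) * ‖α k‖ := by
    rw [norm_mul, Complex.norm_of_nonneg (sub_nonneg.2 (one_le_expTent hε₀.le hk))]
  obtain ⟨k₀, hk₀, hmax⟩ :=
    (Finset.range (2 * L + 1)).exists_max_image (fun k => ‖F k‖) ⟨0, by simp⟩
  simp only [Finset.mem_range, Nat.lt_succ_iff] at hk₀ hmax
  have hαF {k : ℕ} (hk : k ≤ 2 * L) : ‖α k‖ ≤ ‖F k₀‖ :=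
    ((hL k hk).trans_eq (hF (by lia)).symm).trans (hmax L (by lia))
  have hne : F k₀ ≠ 0 :=
    norm_pos_iff.1 (((Real.exp_pos _).trans_le (hlower 0)).trans_le (hαF (Nat.zero_le _)))
  refine ⟨2 * L, _, .of_forall_norm_le (by simp [F, e, expTent_zero])
    (by simp [F, e, expTent_two_mul]) hk₀ hne hmax fun k hk => ?_⟩
  have hres : lam * F k - u k * F (k + 1) = lam * α k * ((e k - e (k + 1) : ℝ) : ℂ) := by
    simp only [F]
    push_cast
    linear_combination (1 - (e (k + 1) : ℂ)) * hα k
  have hpeak : e k * ‖α k‖ ≤ 2 * ‖F k₀‖ := by linarith [hF hk.le, hmax k hk.le, hαF hk.le]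
  calc ‖lam * F k - u k * F (k + 1)‖
    _ = ‖lam‖ * ‖α k‖ * |e k - e (k + 1)| := by
      rw [hres, norm_mul, norm_mul, Complex.norm_real, Real.norm_eq_abs]
    _ ≤ ‖lam‖ * ‖α k‖ * (2 * ε * e k) := by
      gcongr
      exact abs_expTent_sub_expTent_succ_le hε₀.le hε₁ L k
    _ = 2 * ε * ‖lam‖ * (e k * ‖α k‖) := by ring
    _ ≤ 2 * ε * ‖lam‖ * (2 * ‖F k₀‖) := by gcongr
    _ = 4 * ε * ‖lam‖ * ‖F k₀‖ := by ring

theorem exists_isShiftQuasimode_orbit {K : Type*} {w : K → ℂ} {φ : K → K} {y : K}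
    (hw : ∀ x, w x ≠ 0) (hlam : lam ≠ 0) (hε₀ : 0 < ε) (hε₁ : ε ≤ 1)
    (hgrowth : ∀ k : ℕ, |birkhoffSum φ (fun t => Real.log ‖w t‖) k y - k * Real.log ‖lam‖| ≤
      ε / 8 * k + C) :
    ∃ n F, IsShiftQuasimode (fun k => w (φ^[k] y)) lam (4 * ε * ‖lam‖) n F := by
  have hnorm (k : ℕ) : ‖lam ^ k / cocycle w φ k y‖ =
      Real.exp (k * Real.log ‖lam‖ - birkhoffSum φ (fun t => Real.log ‖w t‖) k y) := by
    rw [norm_div, norm_cocycle hw, norm_pow, Real.exp_sub, Real.exp_nat_mul,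
      Real.exp_log (norm_pos_iff.2 hlam)]
  refine exists_isShiftQuasimode (α := fun k => lam ^ k / cocycle w φ k y) (C := C)
    (fun k => ?_) hε₀ hε₁ (fun k => ?_) fun k => ?_
  · have := cocycle_ne_zero (φ := φ) hw k y
    have := hw (φ^[k] y)
    rw [cocycle_succ, pow_succ']
    field_simp
  · rw [hnorm]
    exact Real.exp_le_exp.2 (by linarith [(abs_le.1 (hgrowth k)).2])
  · rw [hnorm]
    exact Real.exp_le_exp.2 (by linarith [(abs_le.1 (hgrowth k)).1])

end ShiftQuasimode

/-! ### Bump functions along an orbit -/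

section DisjointSupport

variable {ι K : Type*} {G : ι → K → ℂ} {s : Finset ι}

theorem exists_forall_ne_eq_zero_of_pairwiseDisjoint (hs : s.Nonempty)
    (hdisj : (s : Set ι).PairwiseDisjoint fun i => support (G i)) (x : K) :
    ∃ i ∈ s, ∀ j ∈ s, j ≠ i → G j x = 0 := by
  by_cases h : ∃ i ∈ s, G i x ≠ 0
  · obtain ⟨i, hi, hix⟩ := h
    refine ⟨i, hi, fun j hj hji => by_contra fun hjx => ?_⟩
    exact Set.disjoint_left.1 (hdisj hj hi hji) hjx hix
  · push Not at h
    obtain ⟨i, hi⟩ := hs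
    exact ⟨i, hi, fun j hj _ => h j hj⟩

theorem HolderBound.sum_of_pairwiseDisjoint [MetricSpace K] {a M : ℝ} (hs : s.Nonempty)
    (hG : ∀ i ∈ s, HolderBound a M (G i))
    (hdisj : (s : Set ι).PairwiseDisjoint fun i => support (G i)) :
    HolderBound a (2 * M) fun x => ∑ i ∈ s, G i x := by
  have hM : 0 ≤ M := (hG _ hs.choose_spec).nonneg
  have hle {r : ℝ} (hr : 0 ≤ r) : M * r ≤ 2 * M * r := by nlinarith [mul_nonneg hM hr]
  refine ⟨by positivity, fun x => ?_, fun x y => ?_⟩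
  · obtain ⟨i, hi, hx⟩ := exists_forall_ne_eq_zero_of_pairwiseDisjoint hs hdisj x
    rw [Finset.sum_eq_single_of_mem i hi hx]
    linarith [(hG i hi).norm_le x]
  · obtain ⟨i, hi, hx⟩ := exists_forall_ne_eq_zero_of_pairwiseDisjoint hs hdisj x
    obtain ⟨j, hj, hy⟩ := exists_forall_ne_eq_zero_of_pairwiseDisjoint hs hdisj y
    rw [Finset.sum_eq_single_of_mem i hi hx, Finset.sum_eq_single_of_mem j hj hy]
    rcases eq_or_ne i j with rfl | hij
    · exact ((hG i hi).norm_sub_le x y).trans (hle (by positivity))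
    · have hsplit : G i x - G j y = (G i x - G i y) + (G j x - G j y) := by
        rw [hy i hi hij, hx j hj hij.symm]
        ring
      rw [hsplit, two_mul, add_mul]
      exact norm_add_le_of_le ((hG i hi).norm_sub_le x y) ((hG j hj).norm_sub_le x y)

end DisjointSupport

/-- The tent function of height `1` at `p` for the snowflake metric `dist ^ a`, vanishing outside
the ball `dist p z ^ a < D`; its `a`-Hölder seminorm is of order `D⁻¹`. -/
noncomputable def holderBump {K : Type*} [MetricSpace K] (a D : ℝ) (p z : K) : ℝ :=
  max 0 (1 - dist p z ^ a / D)

section HolderBump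

variable {K : Type*} [MetricSpace K] {a D : ℝ}

theorem dist_rpow_triangle (ha₀ : 0 ≤ a) (ha₁ : a ≤ 1) (x y z : K) :
    dist x z ^ a ≤ dist x y ^ a + dist y z ^ a :=
  (Real.rpow_le_rpow dist_nonneg (dist_triangle x y z) ha₀).trans
    (Real.rpow_add_le_add_rpow dist_nonneg dist_nonneg ha₀ ha₁)

theorem holderBump_nonneg (p z : K) : 0 ≤ holderBump a D p z := le_max_left _ _

theorem holderBump_le_one (hD : 0 ≤ D) (p z : K) : holderBump a D p z ≤ 1 :=
  max_le zero_le_one (sub_le_self _ (by positivity))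

theorem holderBump_eq_zero_of_le (hD : 0 < D) {p z : K} (h : D ≤ dist p z ^ a) :
    holderBump a D p z = 0 :=
  max_eq_left (sub_nonpos.2 ((one_le_div hD).2 h))

theorem holderBump_eq_of_le (hD : 0 < D) {p z : K} (h : dist p z ^ a ≤ D) :
    holderBump a D p z = 1 - dist p z ^ a / D :=
  max_eq_right (sub_nonneg.2 ((div_le_one hD).2 h))

theorem holderBump_apply_isometry {φ : K → K} (hφ : Isometry φ) (p z : K) :
    holderBump a D (φ p) (φ z) = holderBump a D p z := by
  rw [holderBump, holderBump, hφ.dist_eq]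

theorem abs_holderBump_sub_le (ha₀ : 0 ≤ a) (ha₁ : a ≤ 1) (hD : 0 < D) (p x y : K) :
    |holderBump a D p x - holderBump a D p y| ≤ dist x y ^ a / D := by
  have hxy := dist_rpow_triangle ha₀ ha₁ p x y
  have hyx := dist_rpow_triangle ha₀ ha₁ p y x
  rw [dist_comm y x] at hyx
  calc |holderBump a D p x - holderBump a D p y|
    _ ≤ |(1 - dist p x ^ a / D) - (1 - dist p y ^ a / D)| := by
      simpa [holderBump] using
        abs_max_sub_max_le_max 0 (1 - dist p x ^ a / D) 0 (1 - dist p y ^ a / D)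
    _ = |dist p y ^ a - dist p x ^ a| / D := by
      rw [sub_sub_sub_cancel_left, ← sub_div, abs_div, abs_of_pos hD]
    _ ≤ dist x y ^ a / D := by
      gcongr
      exact abs_sub_le_iff.2 ⟨by linarith, by linarith⟩

theorem pairwiseDisjoint_support_mul_holderBump {ι : Type*} {s : Set ι} {p : ι → K} (ha₀ : 0 ≤ a)
    (ha₁ : a ≤ 1) (hD : 0 < D) (hsep : s.Pairwise fun i j => 2 * D ≤ dist (p i) (p j) ^ a)
    (g : ι → K → ℂ) :
    s.PairwiseDisjoint fun i => support fun z => g i z * (holderBump a D (p i) z : ℂ) := by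
  intro i hi j hj hij
  refine Set.disjoint_left.2 fun z hiz hjz => (hsep hi hj hij).not_gt ?_
  have hclose {k : ι} (hk : g k z * (holderBump a D (p k) z : ℂ) ≠ 0) : dist (p k) z ^ a < D :=
    not_le.1 fun h => hk (by rw [holderBump_eq_zero_of_le hD h, Complex.ofReal_zero, mul_zero])
  have hjz := hclose hjz
  rw [dist_comm] at hjz
  linarith [dist_rpow_triangle ha₀ ha₁ (p i) z (p j), hclose hiz]

theorem norm_le_add_of_dist_rpow_lt {g : K → ℂ} {p z : K} {η N : ℝ} (hN : 0 ≤ N)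
    (hp : ‖g p‖ ≤ η) (hg : ∀ x y, ‖g x - g y‖ ≤ N * dist x y ^ a) (hz : dist p z ^ a < D) :
    ‖g z‖ ≤ η + N * D :=
  calc ‖g z‖
    _ ≤ ‖g p‖ + ‖g p - g z‖ := norm_le_norm_add_norm_sub _ _
    _ ≤ η + N * D := add_le_add hp ((hg p z).trans (by gcongr))

theorem norm_mul_holderBump_sub_le (ha₀ : 0 ≤ a) (ha₁ : a ≤ 1) (hD : 0 < D)
    {g : K → ℂ} {p x : K} {η N : ℝ} (hN : 0 ≤ N) (hp : ‖g p‖ ≤ η)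
    (hg : ∀ x y, ‖g x - g y‖ ≤ N * dist x y ^ a) (hx : dist p x ^ a < D) (y : K) :
    ‖g x * (holderBump a D p x : ℂ) - g y * (holderBump a D p y : ℂ)‖ ≤
      (η / D + 2 * N) * dist x y ^ a := by
  have hη : 0 ≤ η := (norm_nonneg _).trans hp
  calc ‖g x * (holderBump a D p x : ℂ) - g y * (holderBump a D p y : ℂ)‖
    _ = ‖g x * ((holderBump a D p x - holderBump a D p y : ℝ) : ℂ) +
        (g x - g y) * (holderBump a D p y : ℂ)‖ := by
      push_cast
      ring_nf
    _ ≤ (η + N * D) * (dist x y ^ a / D) + N * dist x y ^ a * 1 := by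
      refine norm_add_le_of_le ?_ ?_
      · rw [norm_mul, Complex.norm_real]
        gcongr
        exacts [norm_le_add_of_dist_rpow_lt hN hp hg hx, abs_holderBump_sub_le ha₀ ha₁ hD p x y]
      · rw [norm_mul, Complex.norm_of_nonneg (holderBump_nonneg p y)]
        gcongr
        exacts [holderBump_nonneg p y, hg x y, holderBump_le_one hD.le p y]
    _ = (η / D + 2 * N) * dist x y ^ a := by
      field_simp
      ring

-- A small value of `g` at the centre makes up for the steepness of the bump.
theorem HolderBound.mul_holderBump (ha₀ : 0 ≤ a) (ha₁ : a ≤ 1) (hD₀ : 0 < D) (hD₁ : D ≤ 1)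
    {g : K → ℂ} {p : K} {η N : ℝ} (hN : 0 ≤ N) (hp : ‖g p‖ ≤ η)
    (hg : ∀ x y, ‖g x - g y‖ ≤ N * dist x y ^ a) :
    HolderBound a (η / D + 2 * N) fun z => g z * (holderBump a D p z : ℂ) := by
  have hη : 0 ≤ η := (norm_nonneg _).trans hp
  have hle : η + N * D ≤ η / D + 2 * N := add_le_add (le_div_self hη hD₀ hD₁) (by nlinarith)
  have hfar {z : K} (hz : ¬dist p z ^ a < D) : holderBump a D p z = 0 :=
    holderBump_eq_zero_of_le hD₀ (not_lt.1 hz)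
  refine ⟨by positivity, fun z => ?_, fun x y => ?_⟩
  · by_cases hz : dist p z ^ a < D
    · rw [norm_mul, Complex.norm_of_nonneg (holderBump_nonneg p z)]
      exact (mul_le_of_le_one_right (norm_nonneg _) (holderBump_le_one hD₀.le p z)).trans
        ((norm_le_add_of_dist_rpow_lt hN hp hg hz).trans hle)
    · simpa [hfar hz] using by positivity
  · by_cases hx : dist p x ^ a < D
    · exact norm_mul_holderBump_sub_le ha₀ ha₁ hD₀ hN hp hg hx y
    by_cases hy : dist p y ^ a < D
    · rw [norm_sub_rev, dist_comm]
      exact norm_mul_holderBump_sub_le ha₀ ha₁ hD₀ hN hp hg hy x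
    · simpa [hfar hx, hfar hy] using by positivity

theorem eventually_pairwise_two_mul_le_dist_rpow {ι : Type*} (s : Finset ι) {p : ι → K}
    (hp : Injective p) (a : ℝ) :
    ∀ᶠ D in 𝓝[>] (0 : ℝ), (s : Set ι).Pairwise fun i j => 2 * D ≤ dist (p i) (p j) ^ a := by
  have hpair : ∀ᶠ D in 𝓝[>] (0 : ℝ), ∀ i ∈ s, ∀ j ∈ s, i ≠ j → 2 * D ≤ dist (p i) (p j) ^ a := by
    simp only [eventually_all_finset, eventually_imp_distrib_left]
    intro i _ j _ hij
    have hpos : 0 < dist (p i) (p j) ^ a := Real.rpow_pos_of_pos (dist_pos.2 (hp.ne hij)) a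
    have hlim : Tendsto (fun D : ℝ => 2 * D) (𝓝[>] 0) (𝓝 (2 * 0)) :=
      (continuous_const_mul 2).continuousWithinAt
    exact (hlim.eventually_lt_const (by simpa using hpos)).mono fun _ => le_of_lt
  exact hpair.mono fun D h i hi j hj => h i hi j hj

end HolderBump

/-- The function taking the value `F k` at the `k`-th point of the orbit of `y`, for `k < n`, and
decaying to `0` away from these points. -/
noncomputable def orbitTower {K : Type*} [MetricSpace K] (a D : ℝ) (φ : K → K) (y : K) (n : ℕ)
    (F : ℕ → ℂ) (z : K) : ℂ :=
  ∑ k ∈ Finset.range n, F k * (holderBump a D (φ^[k] y) z : ℂ)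

section OrbitTower

variable {K : Type*} [MetricSpace K] {a D η W : ℝ} {φ : K → K} {y : K} {w : K → ℂ} {lam : ℂ}
  {n : ℕ} {F : ℕ → ℂ}

-- The isometry `φ` carries the bump at `φ^[k] y` to the bump at `φ^[k + 1] y`, so on the tower the
-- operator acts as a weighted shift of the coefficients.
theorem smul_orbitTower_sub_weightedComp (hφ : Isometry φ) (hzero : F 0 = 0) (hlast : F n = 0) :
    lam • orbitTower a D φ y n F - weightedComp w φ (orbitTower a D φ y n F) = fun z =>
      ∑ k ∈ Finset.range n,
        (lam * F k - w z * F (k + 1)) * (holderBump a D (φ^[k] y) z : ℂ) := by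
  funext z
  have hshift : orbitTower a D φ y n F (φ z) =
      ∑ k ∈ Finset.range n, F (k + 1) * (holderBump a D (φ^[k] y) z : ℂ) := by
    have hends := Finset.sum_range_succ' (fun k => F k * (holderBump a D (φ^[k] y) (φ z) : ℂ)) n
    rw [Finset.sum_range_succ] at hends
    simpa [orbitTower, hzero, hlast, iterate_succ_apply', holderBump_apply_isometry hφ] using hends
  simp only [Pi.sub_apply, Pi.smul_apply, weightedComp, hshift]
  simp only [orbitTower, smul_eq_mul, Finset.mul_sum, ← Finset.sum_sub_distrib]
  exact Finset.sum_congr rfl fun k _ => by ring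

theorem holderBound_orbitTower (ha₀ : 0 ≤ a) (ha₁ : a ≤ 1) (hD₀ : 0 < D) (hD₁ : D ≤ 1)
    (hsep : (Finset.range n : Set ℕ).Pairwise fun i j => 2 * D ≤ dist (φ^[i] y) (φ^[j] y) ^ a)
    (hn : n ≠ 0) (hF : ∀ k < n, ‖F k‖ ≤ 1) :
    HolderBound a (2 * (1 / D)) (orbitTower a D φ y n F) := by
  refine .sum_of_pairwiseDisjoint (Finset.nonempty_range_iff.2 hn) (fun k hk => ?_)
    (pairwiseDisjoint_support_mul_holderBump ha₀ ha₁ hD₀ hsep fun k _ => F k)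
  simpa using HolderBound.mul_holderBump (g := fun _ => F k) (p := φ^[k] y) ha₀ ha₁ hD₀ hD₁
    le_rfl (hF k (Finset.mem_range.1 hk)) (by simp)

theorem holderBound_smul_orbitTower_sub_weightedComp (ha₀ : 0 ≤ a) (ha₁ : a ≤ 1) (hD₀ : 0 < D)
    (hD₁ : D ≤ 1)
    (hsep : (Finset.range n : Set ℕ).Pairwise fun i j => 2 * D ≤ dist (φ^[i] y) (φ^[j] y) ^ a)
    (hφ : Isometry φ) (hw : HolderBound a W w)
    (hF : IsShiftQuasimode (fun k => w (φ^[k] y)) lam η n F) :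
    HolderBound a (2 * (η / D + 2 * W))
      (lam • orbitTower a D φ y n F - weightedComp w φ (orbitTower a D φ y n F)) := by
  obtain ⟨k₀, hk₀, -⟩ := hF.exists_norm_eq_one
  rw [smul_orbitTower_sub_weightedComp hφ hF.zero_eq hF.last_eq]
  refine .sum_of_pairwiseDisjoint ⟨k₀, Finset.mem_range.2 hk₀⟩ (fun k hk => ?_)
    (pairwiseDisjoint_support_mul_holderBump ha₀ ha₁ hD₀ hsep _)
  have hk := Finset.mem_range.1 hk
  refine .mul_holderBump ha₀ ha₁ hD₀ hD₁ hw.nonneg (hF.norm_residual_le k hk) fun x z => ?_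
  have := hw.nonneg
  calc ‖lam * F k - w x * F (k + 1) - (lam * F k - w z * F (k + 1))‖
    _ = ‖w x - w z‖ * ‖F (k + 1)‖ := by
      rw [sub_sub_sub_cancel_left, ← sub_mul, norm_mul, norm_sub_rev]
    _ ≤ W * dist x z ^ a * 1 := by
      gcongr
      exacts [hw.norm_sub_le x z, hF.norm_le_one (k + 1) hk]
    _ = W * dist x z ^ a := mul_one _

theorem orbitTower_eq_of_dist_rpow_lt (ha₀ : 0 ≤ a) (ha₁ : a ≤ 1) (hD : 0 < D)
    (hsep : (Finset.range n : Set ℕ).Pairwise fun i j => 2 * D ≤ dist (φ^[i] y) (φ^[j] y) ^ a)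
    {k : ℕ} (hk : k < n) {z : K} (hz : dist (φ^[k] y) z ^ a < D) :
    orbitTower a D φ y n F z = F k * ((1 - dist (φ^[k] y) z ^ a / D : ℝ) : ℂ) := by
  rw [orbitTower, Finset.sum_eq_single_of_mem k (Finset.mem_range.2 hk),
    holderBump_eq_of_le hD hz.le]
  intro j hj hjk
  have hfar : D ≤ dist (φ^[j] y) z ^ a := by
    have := hsep hj (Finset.mem_coe.2 (Finset.mem_range.2 hk)) hjk
    have := dist_rpow_triangle ha₀ ha₁ (φ^[j] y) z (φ^[k] y)
    rw [dist_comm z] at this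
    linarith
  rw [holderBump_eq_zero_of_le hD hfar, Complex.ofReal_zero, mul_zero]

theorem one_div_le_of_holderBound_orbitTower (ha₀ : 0 < a) (ha₁ : a ≤ 1) (hD : 0 < D)
    (hsep : (Finset.range n : Set ℕ).Pairwise fun i j => 2 * D ≤ dist (φ^[i] y) (φ^[j] y) ^ a)
    {k : ℕ} (hk : k < n) (hF : ‖F k‖ = 1) [(𝓝[≠] (φ^[k] y)).NeBot] {M : ℝ}
    (hM : HolderBound a M (orbitTower a D φ y n F)) : 1 / D ≤ M := by
  set p := φ^[k] y with hp
  have hdist_self : dist p p ^ a = 0 := by rw [dist_self, Real.zero_rpow ha₀.ne']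
  have hcont : Continuous fun q => dist p q ^ a :=
    (continuous_const.dist continuous_id).rpow_const fun _ => .inr ha₀.le
  obtain ⟨q, hq, hqp⟩ : ∃ q, dist p q ^ a < D ∧ q ≠ p :=
    ((((hcont.tendsto' p 0 hdist_self).eventually_lt_const hD).filter_mono
      nhdsWithin_le_nhds).and (eventually_mem_nhdsWithin (s := {p}ᶜ))).exists
  have hpq : p ≠ q := Ne.symm hqp
  have hpos : 0 < dist p q ^ a := Real.rpow_pos_of_pos (dist_pos.2 hpq) a
  refine le_trans (le_of_eq ?_) (hM.div_le hpq)
  rw [orbitTower_eq_of_dist_rpow_lt ha₀.le ha₁ hD hsep hk (hdist_self.trans_lt hD),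
    orbitTower_eq_of_dist_rpow_lt ha₀.le ha₁ hD hsep hk hq, ← mul_sub, ← Complex.ofReal_sub,
    norm_mul, hF, hdist_self, zero_div, sub_sub_sub_cancel_left, sub_zero,
    Complex.norm_of_nonneg (by positivity), one_mul, ← hp]
  field_simp

end OrbitTower

/-! ### The spectrum -/

section NotInResolvent

variable {K : Type*} [MetricSpace K] [CompactSpace K] {a : ℝ} {w : K → ℂ} {lam : ℂ}

theorem injective_iterate_of_notMem_periodicPts {X : Type*} {φ : X → X} (hφ : Injective φ) {y : X}
    (hy : y ∉ periodicPts φ) : Injective fun k => φ^[k] y := by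
  intro i j hij
  by_contra hne
  wlog hlt : i < j generalizing i j
  · exact this hij.symm (Ne.symm hne) (by lia)
  exact hy ⟨j - i, by lia, iterate_cancel hφ hij.symm⟩

theorem exists_holderNorm_le_of_inResolvent {φ : K → K} (ha : 0 < a) (hw : w ∈ HolSet a)
    (hφ : LipschitzWith 1 φ)
    (h : InResolvent (HolSet a) (holderNorm a) (weightedComp w φ) lam) :
    ∃ Q > 0, ∀ f ∈ HolSet a, holderNorm a f ≤ Q * holderNorm a (lam • f - weightedComp w φ f) := by
  obtain ⟨-, hinj, Q, hQ, hsurj⟩ := h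
  refine ⟨Q, hQ, fun f hf => ?_⟩
  obtain ⟨g, hg, hgf, hle⟩ := hsurj _ (smul_sub_weightedComp_mem_holSet ha hw hφ lam hf)
  have hsub : g - f ∈ HolSet a :=
    ((HolderBound.of_mem_holSet ha hg).sub (.of_mem_holSet ha hf)).mem_holSet
  have hgf : g = f := by
    refine sub_eq_zero.1 (hinj _ hsub (funext fun t => ?_))
    have := congrFun hgf t
    simp only [weightedComp, Pi.sub_apply, Pi.smul_apply, smul_eq_mul, Pi.zero_apply] at this ⊢
    linear_combination this
  rwa [hgf] at hle

theorem exists_approx_eigenvector_of_isShiftQuasimode [ConnectedSpace K] {φ : K → K} (ha₀ : 0 < a)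
    (ha₁ : a ≤ 1) (hφ : Isometry φ) (hw : w ∈ HolSet a) {y : K} (hy : y ∉ periodicPts φ)
    {η : ℝ} (hη : 0 < η) {n : ℕ} {F : ℕ → ℂ}
    (hF : IsShiftQuasimode (fun k => w (φ^[k] y)) lam η n F) :
    ∃ f ∈ HolSet a, 0 < holderNorm a f ∧
      holderNorm a (lam • f - weightedComp w φ f) ≤ 8 * η * holderNorm a f := by
  have hinj := injective_iterate_of_notMem_periodicPts hφ.injective hy
  have : Nontrivial K := hinj.nontrivial
  obtain ⟨k₀, hk₀, hFk₀⟩ := hF.exists_norm_eq_one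
  have hW := HolderBound.of_mem_holSet ha₀ hw
  set W := holderNorm a w
  have hsmall : ∀ᶠ D in 𝓝[>] (0 : ℝ), 2 * W * D ≤ η := by
    have hlim : Tendsto (fun D : ℝ => 2 * W * D) (𝓝[>] 0) (𝓝 (2 * W * 0)) :=
      (continuous_const_mul _).continuousWithinAt
    exact (hlim.eventually_lt_const (by simpa using hη)).mono fun _ => le_of_lt
  have hunit : ∀ᶠ D in 𝓝[>] (0 : ℝ), D ∈ Set.Ioo 0 1 := Ioo_mem_nhdsGT one_pos
  obtain ⟨D, ⟨hD₀, hD₁⟩, hWD, hsep⟩ := (hunit.and <| hsmall.and <|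
    eventually_pairwise_two_mul_le_dist_rpow (Finset.range n) hinj a).exists
  have htower := holderBound_orbitTower ha₀.le ha₁ hD₀ hD₁.le hsep (by lia)
    fun k hk => hF.norm_le_one k hk.le
  have hlow : 1 / D ≤ holderNorm a (orbitTower a D φ y n F) :=
    one_div_le_of_holderBound_orbitTower ha₀ ha₁ hD₀ hsep hk₀ hFk₀
      (.of_mem_holSet ha₀ htower.mem_holSet)
  refine ⟨_, htower.mem_holSet, (by positivity : 0 < 1 / D).trans_le hlow, ?_⟩
  calc holderNorm a (lam • orbitTower a D φ y n F - weightedComp w φ (orbitTower a D φ y n F))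
    _ ≤ 2 * (2 * (η / D + 2 * W)) := (holderBound_smul_orbitTower_sub_weightedComp ha₀.le ha₁ hD₀
      hD₁.le hsep hφ hW hF).holderNorm_le
    _ = 4 * (η + 2 * W * D) * (1 / D) := by
      field_simp
      ring
    _ ≤ 8 * η * (1 / D) := by
      gcongr ?_ * _
      linarith
    _ ≤ 8 * η * holderNorm a (orbitTower a D φ y n F) := by gcongr

theorem exists_notMem_periodicPts_abs_birkhoffSum_sub_le {φ : K → K} (hφ : LipschitzWith 1 φ)
    (hmeagre : IsMeagre (periodicPts φ)) {f : K → ℝ} (hf : Continuous f) (x₀ : K) {ε : ℝ}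
    (hε : 0 < ε) :
    ∃ y ∉ periodicPts φ, ∃ C, ∀ k : ℕ,
      |birkhoffSum φ f k y - k * birkhoffLimit φ f x₀| ≤ ε * k + C := by
  have hnear : ∀ᶠ y in 𝓝 x₀, |birkhoffLimit φ f y - birkhoffLimit φ f x₀| < ε / 2 :=
    (continuous_birkhoffLimit hφ hf).continuousAt.eventually
      (Metric.ball_mem_nhds _ (half_pos hε))
  obtain ⟨y, hy, hynear⟩ := (dense_of_mem_residual hmeagre).inter_nhds_nonempty hnear
  obtain ⟨C, hC⟩ := exists_norm_birkhoffSum_sub_le hφ hf (half_pos hε)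
  refine ⟨y, hy, C, fun k => ?_⟩
  calc |birkhoffSum φ f k y - k * birkhoffLimit φ f x₀|
    _ = |(birkhoffSum φ f k y - k * birkhoffLimit φ f y) +
        k * (birkhoffLimit φ f y - birkhoffLimit φ f x₀)| := by ring_nf
    _ ≤ ε / 2 * k + C + k * (ε / 2) := by
      refine (abs_add_le _ _).trans (add_le_add (hC k y) ?_)
      rw [abs_mul, Nat.abs_cast]
      exact mul_le_mul_of_nonneg_left (le_of_lt hynear) k.cast_nonneg
    _ = ε * k + C := by ring

theorem not_inResolvent_of_norm_eq_exp_birkhoffLimit [ConnectedSpace K] {φ : K → K} (ha₀ : 0 < a)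
    (ha₁ : a ≤ 1) (hφ : Isometry φ) (hmeagre : IsMeagre (periodicPts φ)) (hw : w ∈ HolSet a)
    (hw₀ : ∀ t, w t ≠ 0) {x₀ : K}
    (hlam : ‖lam‖ = Real.exp (birkhoffLimit φ (fun t => Real.log ‖w t‖) x₀)) :
    ¬InResolvent (HolSet a) (holderNorm a) (weightedComp w φ) lam := by
  intro h
  obtain ⟨Q, hQ, hbound⟩ := exists_holderNorm_le_of_inResolvent ha₀ hw hφ.lipschitz h
  have hpos : 0 < ‖lam‖ := hlam ▸ Real.exp_pos _
  obtain ⟨ε, hε₀, hε⟩ := exists_between (show 0 < min 1 (1 / (32 * ‖lam‖ * Q)) by positivity)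
  obtain ⟨hε₁, hεQ⟩ := lt_min_iff.1 hε
  obtain ⟨y, hy, C, hC⟩ := exists_notMem_periodicPts_abs_birkhoffSum_sub_le hφ.lipschitz hmeagre
    (continuous_log_norm_of_mem_holSet ha₀ hw hw₀) x₀ (show 0 < ε / 8 by positivity)
  rw [← Real.log_exp (birkhoffLimit _ _ _), ← hlam] at hC
  obtain ⟨n, F, hF⟩ := exists_isShiftQuasimode_orbit hw₀ (norm_pos_iff.1 hpos) hε₀ hε₁.le hC
  obtain ⟨f, hf, hfpos, hfres⟩ := exists_approx_eigenvector_of_isShiftQuasimode ha₀ ha₁ hφ hw hy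
    (by positivity) hF
  rw [lt_div_iff₀ (by positivity)] at hεQ
  refine (hbound f hf).not_gt ?_
  calc Q * holderNorm a (lam • f - weightedComp w φ f)
    _ ≤ Q * (8 * (4 * ε * ‖lam‖) * holderNorm a f) := by gcongr
    _ = ε * (32 * ‖lam‖ * Q) * holderNorm a f := by ring
    _ < holderNorm a f := mul_lt_of_lt_one_left hfpos hεQ

theorem not_inResolvent_iff [ConnectedSpace K] {φ : K ≃ᵢ K} (ha₀ : 0 < a) (ha₁ : a ≤ 1)
    (hmeagre : IsMeagre (periodicPts φ)) (hw : w ∈ HolSet a) (hw₀ : ∀ t, w t ≠ 0)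
    (hwinv : (fun t => (w t)⁻¹) ∈ HolSet a) :
    ¬InResolvent (HolSet a) (holderNorm a) (weightedComp w φ) lam ↔
      ‖lam‖ ∈ Set.range fun x => Real.exp (birkhoffLimit φ (fun t => Real.log ‖w t‖) x) := by
  refine ⟨fun h => ?_, ?_⟩
  · have hcont := Real.continuous_exp.comp (continuous_birkhoffLimit φ.isometry.lipschitz
      (continuous_log_norm_of_mem_holSet ha₀ hw hw₀))
    refine mem_range_of_exists_le_of_exists_ge hcont ?_ ?_ <;> by_contra! hlt
    · exact h (inResolvent_of_lt_exp_birkhoffLimit ha₀ hw hw₀ hwinv hlt)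
    · exact h (inResolvent_of_exp_birkhoffLimit_lt ha₀ hw hw₀ hlt)
  · rintro ⟨x₀, hx₀⟩
    exact not_inResolvent_of_norm_eq_exp_birkhoffLimit ha₀ ha₁ φ.isometry hmeagre hw hw₀ hx₀.symm

end NotInResolvent

end

/-- If `K` is a connected compact metric space, `φ` an isometry of `K` whose periodic
points form a meagre set, and `w` invertible in `Lip_α(K)`, then the spectrum of
`T f = w·(f∘φ)` on `Lip_α(K)` is the annulus (possibly a circle) with radii
`r = min_{μ ∈ M_φ} exp(∫ ln|w| dμ)` and `R = max_{μ ∈ M_φ} exp(∫ ln|w| dμ)`, where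
`M_φ` is the set of `φ`-invariant Borel probability measures on `K`. -/
theorem stmt14 {K : Type*} [MetricSpace K] [CompactSpace K] [ConnectedSpace K]
    [MeasurableSpace K] [BorelSpace K]
    (φ : K ≃ₜ K) (hφ : Isometry φ)
    (hmeagre : IsMeagre {k : K | ∃ p : ℕ, 0 < p ∧ (⇑φ)^[p] k = k})
    (a : ℝ) (ha0 : 0 < a) (ha1 : a ≤ 1)
    (w : K → ℂ) (hw : w ∈ HolSet a) (hwne : ∀ t, w t ≠ 0)
    (hwinv : (fun t => (w t)⁻¹) ∈ HolSet a) :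
    {lam : ℂ | ¬ InResolvent (HolSet a) (holderNorm a)
        (fun f => fun t => w t * f (φ t)) lam} =
    {lam : ℂ |
      sInf {x : ℝ | ∃ μ : Measure K, IsProbabilityMeasure μ ∧ Measure.map (⇑φ) μ = μ ∧
          x = Real.exp (∫ t, Real.log ‖w t‖ ∂μ)} ≤ ‖lam‖ ∧
      ‖lam‖ ≤ sSup {x : ℝ | ∃ μ : Measure K, IsProbabilityMeasure μ ∧ Measure.map (⇑φ) μ = μ ∧
          x = Real.exp (∫ t, Real.log ‖w t‖ ∂μ)}} := by
  have hlip : LipschitzWith 1 φ := hφ.lipschitz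
  let F : K → ℝ := birkhoffLimit φ fun t => Real.log ‖w t‖
  have hlog := continuous_log_norm_of_mem_holSet ha0 hw hwne
  have hF : Continuous fun x => Real.exp (F x) :=
    Real.continuous_exp.comp (continuous_birkhoffLimit hlip hlog)
  have hradii : {x : ℝ | ∃ μ : Measure K, IsProbabilityMeasure μ ∧ Measure.map (⇑φ) μ = μ ∧
      x = Real.exp (∫ t, Real.log ‖w t‖ ∂μ)} = Set.range fun x => Real.exp (F x) := by
    ext r
    rw [show (fun x => Real.exp (F x)) = Real.exp ∘ F from rfl, Set.range_comp, Set.mem_image]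
    simp only [F, ← exists_integral_eq_iff_mem_range_birkhoffLimit hlip hlog]
    grind
  have hIcc := eq_Icc_of_connected_compact (isConnected_range hF) (isCompact_range hF)
  ext lam
  rw [hradii]
  change ¬InResolvent _ _ (weightedComp w φ) lam ↔ ‖lam‖ ∈ Set.Icc _ _
  rw [← hIcc]
  exact not_inResolvent_iff (φ := IsometryEquiv.mk φ.toEquiv hφ) ha0 ha1 hmeagre hw hwne hwinv
end

section
/- Let A be the Wiener algebra of functions on the circle 𝕋 with absolutely convergent Fourier series, α ∈ 𝕋 not a root of unity, w ∈ A invertible, and (Tf)(z) = w(z) f(αz). Then the spectrum of T on A contains the circle c𝕋 of radius c = exp( (1/2π) ∫₀^{2π} ln|w(e^{iθ})| dθ ). -/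
/-- The set of functions on the circle with absolutely convergent Fourier series
(the Wiener algebra). -/
def WienerSet : Set (Circle → ℂ) :=
  {f | ∃ c : ℤ → ℂ, Summable (fun n => ‖c n‖) ∧ ∀ z : Circle, f z = ∑' n : ℤ, c n * (z : ℂ) ^ n}

/-- The Wiener norm `∑ |f̂(n)|` of a function on the circle. -/
noncomputable def wienerNorm (f : Circle → ℂ) : ℝ :=
  sInf {r : ℝ | ∃ c : ℤ → ℂ, Summable (fun n => ‖c n‖) ∧
    (∀ z : Circle, f z = ∑' n : ℤ, c n * (z : ℂ) ^ n) ∧ r = ∑' n : ℤ, ‖c n‖}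

/-!
Suppose `lam • I - T` has a bounded right inverse, and put `u = w / lam`,
`u_n(z) = ∏_{k<n} u(α ^ k z)`. Multiplication by `z ^ k` conjugates the operator with weight `u` to
the one with weight `α ^ k u`, so solving for the right hand sides `z ^ k` yields, for the dense set
of `μ = α ^ k`, functions `F_μ` with `F_μ(z) - μ u(z) F_μ(αz) = 1` and `|F_μ| ≤ M`. Iterating,
`∑_{k<n} μ ^ k u_k(z) = F_μ(z) - μ ^ n u_n(z) F_μ(α ^ n z)`, so Parseval's identity in `μ` gives
`∑_{k<n} |u_k(z)|² ≤ M² (1 + |u_n(z)|)²`. Hence no long piece of the sequence `|u_k(z)|` can stay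
above a fixed proportion of its end values: for some `L` and every `z`, either `|u_L(z)| ≤ 1/2` or
`|u_L(α ^ L z)| ≥ 2`. As every point is recurrent under `z ↦ α ^ L z`, this forces `|u_L| ≤ 1/2` or
`|u_L| ≥ 2` at each point, whereas `log |u_L|` has mean zero and thus vanishes somewhere.
-/

open Filter Finset Topology

section BirkhoffProd

variable {X M : Type*} [CommMonoid M]

/-- The product of the values of `u` at the first `n` points of the orbit of `x` under `φ`, the
multiplicative counterpart of `birkhoffSum`. It is the weight of the `n`-th power of the weighted
composition operator `f ↦ u * f ∘ φ`. -/
def birkhoffProd (φ : X → X) (u : X → M) (n : ℕ) (x : X) : M :=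
  ∏ k ∈ range n, u (φ^[k] x)

theorem birkhoffProd_zero (φ : X → X) (u : X → M) (x : X) : birkhoffProd φ u 0 x = 1 :=
  prod_range_zero _

theorem birkhoffProd_succ (φ : X → X) (u : X → M) (n : ℕ) (x : X) :
    birkhoffProd φ u (n + 1) x = birkhoffProd φ u n x * u (φ^[n] x) :=
  prod_range_succ _ _

theorem birkhoffProd_add (φ : X → X) (u : X → M) (m n : ℕ) (x : X) :
    birkhoffProd φ u (m + n) x = birkhoffProd φ u m x * birkhoffProd φ u n (φ^[m] x) := by
  simp_rw [birkhoffProd, prod_range_add, add_comm m, Function.iterate_add_apply]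

theorem birkhoffProd_const_mul (φ : X → X) (c : M) (u : X → M) (n : ℕ) (x : X) :
    birkhoffProd φ (fun y => c * u y) n x = c ^ n * birkhoffProd φ u n x := by
  simp [birkhoffProd, prod_mul_distrib]

theorem continuous_birkhoffProd [TopologicalSpace X] [TopologicalSpace M] [ContinuousMul M]
    {φ : X → X} {u : X → M} (hφ : Continuous φ) (hu : Continuous u) (n : ℕ) :
    Continuous (birkhoffProd φ u n) :=
  continuous_finsetProd _ fun k _ => hu.comp (hφ.iterate k)

theorem log_norm_birkhoffProd {𝕜 : Type*} [NormedField 𝕜] (φ : X → X) {u : X → 𝕜}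
    (hu : ∀ x, u x ≠ 0) (n : ℕ) (x : X) :
    Real.log ‖birkhoffProd φ u n x‖ = birkhoffSum φ (fun y => Real.log ‖u y‖) n x := by
  rw [birkhoffProd, norm_prod, Real.log_prod fun k _ => norm_ne_zero_iff.mpr (hu _), birkhoffSum]

end BirkhoffProd

section ResolventEquation

variable {X : Type*}

theorem sum_birkhoffProd_mul_pow_of_resolvent_eq {R : Type*} [CommRing R] {φ : X → X}
    {u F : X → R} {μ : R} (hF : ∀ x, F x - μ * (u x * F (φ x)) = 1) (n : ℕ) (x : X) :
    ∑ k ∈ range n, birkhoffProd φ u k x * μ ^ k =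
      F x - μ ^ n * (birkhoffProd φ u n x * F (φ^[n] x)) := by
  induction n with
  | zero => simp [birkhoffProd_zero]
  | succ n ih =>
    rw [sum_range_succ, ih, birkhoffProd_succ, Function.iterate_succ_apply']
    linear_combination -μ ^ n * birkhoffProd φ u n x * hF (φ^[n] x)

theorem sum_sq_norm_le_sq_of_dense {S : Set Circle} (hS : Dense S) (a : ℕ → ℂ) (n : ℕ) {B : ℝ}
    (hB : ∀ μ ∈ S, ‖∑ k ∈ range n, a k * (μ : ℂ) ^ k‖ ≤ B) :
    ∑ k ∈ range n, ‖a k‖ ^ 2 ≤ B ^ 2 := by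
  have bound : ∀ μ : Circle, ‖∑ k ∈ range n, a k * (μ : ℂ) ^ k‖ ≤ B := by
    have hclosed : IsClosed {μ : Circle | ‖∑ k ∈ range n, a k * (μ : ℂ) ^ k‖ ≤ B} :=
      isClosed_le (by fun_prop) continuous_const
    exact fun μ => hclosed.closure_subset_iff.mpr hB (hS μ)
  let p : Polynomial ℂ := ∑ k ∈ range n, Polynomial.monomial k (a k)
  have hcoeff (k : ℕ) : p.coeff k = if k ∈ range n then a k else 0 := by
    simp [p, Polynomial.coeff_monomial]
  have hsupport : p.support ⊆ range n := fun k hk => by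
    by_contra hkn
    exact Polynomial.mem_support_iff.mp hk ((hcoeff k).trans (if_neg hkn))
  calc ∑ k ∈ range n, ‖a k‖ ^ 2
      = ∑ k ∈ range n, ‖p.coeff k‖ ^ 2 := sum_congr rfl fun k hk => by rw [hcoeff, if_pos hk]
    _ = ∑ k ∈ p.support, ‖p.coeff k‖ ^ 2 :=
        (sum_subset hsupport fun k _ hk => by simp [Polynomial.notMem_support_iff.mp hk]).symm
    _ = Real.circleAverage (fun z => ‖p.eval z‖ ^ 2) 0 1 := p.sum_sq_norm_coeff_eq_circleAverage
    _ ≤ B ^ 2 := by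
        refine Real.circleAverage_mono_on_of_le_circle
          (Continuous.continuousOn (by fun_prop)).circleIntegrable' fun z hz => ?_
        rw [abs_one] at hz
        simpa [p, Polynomial.eval_finsetSum] using
          pow_le_pow_left₀ (norm_nonneg _) (bound ⟨z, hz⟩) 2

/-- The equation `F - μ u (F ∘ φ) = 1` has, for a dense set of `μ` on the unit circle, a solution
`F` bounded by `M`: what a bounded right inverse of `1 - μ u (· ∘ φ)` provides, uniformly in `μ`. -/
def HasBoundedSolutions (φ : X → X) (u : X → ℂ) (M : ℝ) : Prop :=
  ∃ S : Set Circle, Dense S ∧ ∀ μ ∈ S, ∃ F : X → ℂ,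
    (∀ x, ‖F x‖ ≤ M) ∧ ∀ x, F x - μ * (u x * F (φ x)) = 1

variable {φ : X → X} {u : X → ℂ} {M : ℝ}

theorem HasBoundedSolutions.mono {M' : ℝ} (h : HasBoundedSolutions φ u M) (hM : M ≤ M') :
    HasBoundedSolutions φ u M' := by
  obtain ⟨S, hS, hsol⟩ := h
  refine ⟨S, hS, fun μ hμ => ?_⟩
  obtain ⟨F, hFM, hF⟩ := hsol μ hμ
  exact ⟨F, fun x => (hFM x).trans hM, hF⟩

theorem HasBoundedSolutions.sum_sq_norm_birkhoffProd_le (h : HasBoundedSolutions φ u M)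
    (n : ℕ) (x : X) :
    ∑ k ∈ range n, ‖birkhoffProd φ u k x‖ ^ 2 ≤ (M * (1 + ‖birkhoffProd φ u n x‖)) ^ 2 := by
  obtain ⟨S, hS, hsol⟩ := h
  refine sum_sq_norm_le_sq_of_dense hS _ n fun μ hμ => ?_
  obtain ⟨F, hFM, hF⟩ := hsol μ hμ
  calc ‖∑ k ∈ range n, birkhoffProd φ u k x * (μ : ℂ) ^ k‖
      = ‖F x - μ ^ n * (birkhoffProd φ u n x * F (φ^[n] x))‖ := by
        rw [sum_birkhoffProd_mul_pow_of_resolvent_eq hF]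
    _ ≤ ‖F x‖ + ‖birkhoffProd φ u n x‖ * ‖F (φ^[n] x)‖ := by
        simpa [Circle.norm_coe] using
          norm_sub_le (F x) (μ ^ n * (birkhoffProd φ u n x * F (φ^[n] x)))
    _ ≤ M + ‖birkhoffProd φ u n x‖ * M := by gcongr <;> exact hFM _
    _ = M * (1 + ‖birkhoffProd φ u n x‖) := by ring

theorem HasBoundedSolutions.sum_sq_norm_birkhoffProd_add_le (h : HasBoundedSolutions φ u M)
    (j n : ℕ) (x : X) :
    ∑ k ∈ range n, ‖birkhoffProd φ u (j + k) x‖ ^ 2 ≤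
      (M * (‖birkhoffProd φ u j x‖ + ‖birkhoffProd φ u (j + n) x‖)) ^ 2 := by
  simp only [birkhoffProd_add, norm_mul, mul_pow, ← mul_sum]
  calc _ ≤ ‖birkhoffProd φ u j x‖ ^ 2 * (M * (1 + ‖birkhoffProd φ u n (φ^[j] x)‖)) ^ 2 := by
        gcongr
        exact h.sum_sq_norm_birkhoffProd_le n (φ^[j] x)
    _ = _ := by ring

theorem le_mul_add_of_sum_sq_le {s : ℕ → ℝ} (hs : ∀ k, 0 ≤ s k) (hM : 0 ≤ M)
    (hsum : ∀ j n, ∑ k ∈ range n, s (j + k) ^ 2 ≤ (M * (s j + s (j + n))) ^ 2)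
    {i l j : ℕ} (hil : i ≤ l) (hlj : l < j) : s l ≤ M * (s i + s j) := by
  obtain ⟨m, rfl⟩ := Nat.exists_eq_add_of_le hil
  obtain ⟨n, rfl⟩ := Nat.exists_eq_add_of_le (hil.trans hlj.le)
  have hterm : s (i + m) ^ 2 ≤ ∑ k ∈ range n, s (i + k) ^ 2 :=
    single_le_sum (f := fun k => s (i + k) ^ 2) (fun k _ => sq_nonneg _)
      (mem_range.mpr (by lia))
  exact le_of_sq_le_sq (hterm.trans (hsum i n)) (mul_nonneg hM (add_nonneg (hs _) (hs _)))

theorem two_mul_le_or_two_mul_le_of_sum_sq_le {s : ℕ → ℝ} (hs : ∀ k, 0 ≤ s k) (hM : 1 ≤ M)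
    (hsum : ∀ j n, ∑ k ∈ range n, s (j + k) ^ 2 ≤ (M * (s j + s (j + n))) ^ 2)
    {L : ℕ} (hL : 64 * M ^ 4 ≤ L) : 2 * s L ≤ s 0 ∨ 2 * s L ≤ s (L + L) := by
  have half_large : (∀ k < L, s L ≤ 2 * M * s k) ∨ ∀ k < L, s L ≤ 2 * M * s (L + k) := by
    by_contra! ⟨⟨i, hi, hsi⟩, k, hk, hsk⟩
    have hk0 : k ≠ 0 := by
      rintro rfl
      rw [add_zero] at hsk
      nlinarith [hs L]
    nlinarith [le_mul_add_of_sum_sq_le hs (by linarith) hsum hi.le (by lia : L < L + k)]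
  have card_mul_le (t : ℕ → ℝ) (ht : ∀ k < L, s L ≤ 2 * M * t k) :
      L * s L ^ 2 ≤ (2 * M) ^ 2 * ∑ k ∈ range L, t k ^ 2 := by
    rw [mul_sum, ← nsmul_eq_mul]
    simpa [mul_pow] using card_nsmul_le_sum (range L) (fun k => (2 * M * t k) ^ 2) (s L ^ 2)
      fun k hk => pow_le_pow_left₀ (hs L) (ht k (mem_range.mp hk)) 2
  have sum_ge : L * s L ^ 2 ≤ (2 * M) ^ 2 * ∑ k ∈ range (L + L), s k ^ 2 := by
    rw [sum_range_add, mul_add]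
    obtain left | right := half_large
    · exact (card_mul_le s left).trans (le_add_of_nonneg_right (by positivity))
    · exact (card_mul_le _ right).trans (le_add_of_nonneg_left (by positivity))
  have four_mul_le : 4 * s L ≤ s 0 + s (L + L) := by
    have hsum' : ∑ k ∈ range (L + L), s k ^ 2 ≤ (M * (s 0 + s (L + L))) ^ 2 := by
      simpa using hsum 0 (L + L)
    refine le_of_sq_le_sq (le_of_mul_le_mul_left ?_ (by positivity : 0 < 4 * M ^ 4))
      (add_nonneg (hs _) (hs _))
    calc 4 * M ^ 4 * (4 * s L) ^ 2
        = 64 * M ^ 4 * s L ^ 2 := by ring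
      _ ≤ L * s L ^ 2 := by gcongr
      _ ≤ (2 * M) ^ 2 * (M * (s 0 + s (L + L))) ^ 2 := sum_ge.trans (by gcongr)
      _ = 4 * M ^ 4 * (s 0 + s (L + L)) ^ 2 := by ring
  by_contra! ⟨h0, h2⟩
  linarith

theorem HasBoundedSolutions.exists_norm_le_or_two_le_norm
    (h : HasBoundedSolutions φ u M) (hM : 1 ≤ M) :
    ∃ L, ∀ x, ‖birkhoffProd φ u L x‖ ≤ 1 / 2 ∨ 2 ≤ ‖birkhoffProd φ u L (φ^[L] x)‖ := by
  obtain ⟨L, hL⟩ := exists_nat_ge (64 * M ^ 4)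
  refine ⟨L, fun x => ?_⟩
  have hends := two_mul_le_or_two_mul_le_of_sum_sq_le (s := fun k => ‖birkhoffProd φ u k x‖)
    (fun _ => norm_nonneg _) hM (fun j n => h.sum_sq_norm_birkhoffProd_add_le j n x) hL
  simp only [birkhoffProd_zero, norm_one, birkhoffProd_add, norm_mul] at hends
  refine or_iff_not_imp_left.mpr fun hlarge => ?_
  nlinarith [hends.resolve_left (by linarith)]

end ResolventEquation

section Rotation

theorem le_or_le_of_forall_le_or_le_mul {G : Type*} [Group G] [TopologicalSpace G]
    [IsTopologicalGroup G] [CompactSpace G] {v : G → ℝ} (hv : Continuous v) {g : G} {a b : ℝ}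
    (hab : a < b) (hgap : ∀ z, v z ≤ a ∨ b ≤ v (g * z)) (z : G) : v z ≤ a ∨ b ≤ v z := by
  refine or_iff_not_imp_left.mpr fun hz => ?_
  have orbit : ∀ n : ℕ, b ≤ v (g ^ (n + 1) * z) := fun n => by
    induction n with
    | zero => simpa using (hgap z).resolve_left hz
    | succ n ih =>
      rw [pow_succ', mul_assoc]
      exact (hgap _).resolve_left (hab.trans_le ih).not_ge
  have hcluster : MapClusterPt (v (1 * z)) atTop fun n : ℕ => v (g ^ n * z) :=
    (mapClusterPt_one_atTop_pow g).continuousAt_comp (f := fun y => v (y * z)) (by fun_prop)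
  rw [one_mul] at hcluster
  refine isClosed_Ici.mem_of_mapClusterPt hcluster ?_
  filter_upwards [eventually_gt_atTop 0] with n hn
  obtain ⟨m, rfl⟩ := Nat.exists_eq_succ_of_ne_zero hn.ne'
  exact orbit m

theorem denseRange_zpow_of_forall_pow_ne_one {α : Circle} (hα : ∀ n : ℕ, 0 < n → α ^ n ≠ 1) :
    DenseRange (α ^ · : ℤ → Circle) := by
  let e := AddCircle.homeomorphCircle (one_ne_zero (α := ℝ))
  obtain ⟨a, rfl⟩ := e.surjective α
  have hdense : DenseRange (· • a : ℤ → AddCircle (1 : ℝ)) := by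
    rw [AddCircle.denseRange_zsmul_iff, addOrderOf_eq_zero_iff']
    intro n hn hna
    refine hα n hn ?_
    rw [AddCircle.homeomorphCircle_apply, ← AddCircle.toCircle_nsmul, hna, AddCircle.toCircle_zero]
  convert e.surjective.denseRange.comp hdense e.continuous using 2 with k
  simp [e, AddCircle.homeomorphCircle_apply, AddCircle.toCircle_zsmul]

theorem intervalIntegral_comp_mul_circleExp {E : Type*} [NormedAddCommGroup E] [NormedSpace ℝ E]
    (g : Circle → E) (β : Circle) :
    ∫ θ in (0 : ℝ)..(2 * Real.pi), g (β * Circle.exp θ) =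
      ∫ θ in (0 : ℝ)..(2 * Real.pi), g (Circle.exp θ) := by
  have hperiodic : Function.Periodic (fun θ => g (Circle.exp θ)) (2 * Real.pi) :=
    Circle.periodic_exp.comp g
  calc ∫ θ in (0 : ℝ)..(2 * Real.pi), g (β * Circle.exp θ)
      = ∫ θ in (0 : ℝ)..(2 * Real.pi), g (Circle.exp (Complex.arg β + θ)) := by
        simp only [Circle.exp_add, Circle.exp_arg]
    _ = ∫ θ in Complex.arg β..(Complex.arg β + 2 * Real.pi), g (Circle.exp θ) := by
        rw [intervalIntegral.integral_comp_add_left (fun θ => g (Circle.exp θ)), add_zero]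
    _ = ∫ θ in (0 : ℝ)..(2 * Real.pi), g (Circle.exp θ) := by
        rw [hperiodic.intervalIntegral_add_eq (Complex.arg β) 0, zero_add]

theorem intervalIntegral_birkhoffSum_mul_circleExp {g : Circle → ℝ} (hg : Continuous g)
    (α : Circle) (n : ℕ) :
    ∫ θ in (0 : ℝ)..(2 * Real.pi), birkhoffSum (α * ·) g n (Circle.exp θ) =
      n * ∫ θ in (0 : ℝ)..(2 * Real.pi), g (Circle.exp θ) := by
  simp only [birkhoffSum, mul_left_iterate]
  rw [intervalIntegral.integral_finsetSum fun k _ =>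
    Continuous.intervalIntegrable (by fun_prop) _ _]
  simp [intervalIntegral_comp_mul_circleExp]

theorem exists_norm_birkhoffProd_mul_eq_pow {w : Circle → ℂ} (hw : Continuous w)
    (hwne : ∀ z, w z ≠ 0) (α : Circle) (n : ℕ) :
    ∃ z, ‖birkhoffProd (α * ·) w n z‖ = Real.exp ((2 * Real.pi)⁻¹ *
      ∫ θ in (0 : ℝ)..(2 * Real.pi), Real.log ‖w (Circle.exp θ)‖) ^ n := by
  have hlog : Continuous fun z => Real.log ‖w z‖ :=
    hw.norm.log fun z => norm_ne_zero_iff.mpr (hwne z)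
  have hpos (z : Circle) : 0 < ‖birkhoffProd (α * ·) w n z‖ :=
    norm_pos_iff.mpr (prod_ne_zero_iff.mpr fun _ _ => hwne _)
  have hlog_prod : Continuous fun θ => Real.log ‖birkhoffProd (α * ·) w n (Circle.exp θ)‖ :=
    ((continuous_birkhoffProd (continuous_const_mul α) hw n).norm.log fun z => (hpos z).ne').comp
      Circle.exp.continuous
  obtain ⟨θ, -, hθ⟩ := exists_eq_interval_average Real.two_pi_pos.ne hlog_prod.continuousOn
  refine ⟨Circle.exp θ, ?_⟩
  rw [← Real.exp_log (hpos _), hθ, interval_average_eq, ← Real.exp_nat_mul]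
  simp only [log_norm_birkhoffProd _ hwne, intervalIntegral_birkhoffSum_mul_circleExp hlog]
  rw [sub_zero, smul_eq_mul, mul_left_comm]

end Rotation

section WienerAlgebra

theorem norm_mul_circle_zpow (a : ℂ) (z : Circle) (n : ℤ) : ‖a * (z : ℂ) ^ n‖ = ‖a‖ := by
  simp [Circle.norm_coe]

theorem continuous_of_mem_wienerSet {f : Circle → ℂ} (hf : f ∈ WienerSet) : Continuous f := by
  obtain ⟨c, hc, hfc⟩ := hf
  rw [funext hfc]
  refine continuous_tsum (fun n => ?_) hc fun n z => (norm_mul_circle_zpow (c n) z n).le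
  exact continuous_const.mul (continuous_subtype_val.zpow₀ n fun z => .inl (Circle.coe_ne_zero z))

theorem norm_apply_le_wienerNorm {f : Circle → ℂ} (hf : f ∈ WienerSet) (z : Circle) :
    ‖f z‖ ≤ wienerNorm f := by
  obtain ⟨c₀, hc₀, hfc₀⟩ := hf
  refine le_csInf ⟨_, c₀, hc₀, hfc₀, rfl⟩ ?_
  rintro _ ⟨c, hc, hfc, rfl⟩
  simpa only [hfc z, norm_mul_circle_zpow] using
    norm_tsum_le_tsum_norm (f := fun n => c n * (z : ℂ) ^ n)
      (by simpa only [norm_mul_circle_zpow] using hc)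

theorem zpow_eq_tsum_single (k : ℤ) (z : Circle) :
    (z : ℂ) ^ k = ∑' n : ℤ, (Pi.single k 1 : ℤ → ℂ) n * (z : ℂ) ^ n := by
  simp [tsum_eq_single k (f := fun n => (Pi.single k 1 : ℤ → ℂ) n * (z : ℂ) ^ n)
    fun n hn => by simp [hn]]

theorem hasSum_norm_single (k : ℤ) : HasSum (fun n => ‖(Pi.single k 1 : ℤ → ℂ) n‖) 1 := by
  simpa using
    hasSum_single k (f := fun n => ‖(Pi.single k 1 : ℤ → ℂ) n‖) fun n hn => by simp [hn]

theorem zpow_mem_wienerSet (k : ℤ) : (fun z : Circle => (z : ℂ) ^ k) ∈ WienerSet :=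
  ⟨Pi.single k 1, (hasSum_norm_single k).summable, zpow_eq_tsum_single k⟩

theorem wienerNorm_zpow (k : ℤ) : wienerNorm (fun z : Circle => (z : ℂ) ^ k) = 1 := by
  refine le_antisymm (csInf_le ⟨0, ?_⟩ ?_) ?_
  · rintro _ ⟨c, -, -, rfl⟩
    positivity
  · exact ⟨_, (hasSum_norm_single k).summable, zpow_eq_tsum_single k,
      (hasSum_norm_single k).tsum_eq.symm⟩
  · simpa using norm_apply_le_wienerNorm (zpow_mem_wienerSet k) 1

end WienerAlgebra

section WeightedRotation

variable {w : Circle → ℂ} {α : Circle} {lam : ℂ}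

theorem not_hasBoundedSolutions_mul (hw : Continuous w) (hwne : ∀ z, w z ≠ 0)
    (hlam : ‖lam‖ = Real.exp ((2 * Real.pi)⁻¹ *
      ∫ θ in (0 : ℝ)..(2 * Real.pi), Real.log ‖w (Circle.exp θ)‖)) (M : ℝ) :
    ¬ HasBoundedSolutions (α * ·) (fun z => lam⁻¹ * w z) M := by
  intro h
  obtain ⟨L, hL⟩ := (h.mono (le_max_right 1 M)).exists_norm_le_or_two_le_norm (le_max_left 1 M)
  obtain ⟨z, hz⟩ := exists_norm_birkhoffProd_mul_eq_pow hw hwne α L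
  have hlam0 : ‖lam‖ ≠ 0 := hlam ▸ Real.exp_ne_zero _
  have hz1 : ‖birkhoffProd (α * ·) (fun z => lam⁻¹ * w z) L z‖ = 1 := by
    rw [birkhoffProd_const_mul, norm_mul, hz, ← hlam, norm_pow, norm_inv, ← mul_pow,
      inv_mul_cancel₀ hlam0, one_pow]
  have hcont : Continuous (birkhoffProd (α * ·) (fun z => lam⁻¹ * w z) L) :=
    continuous_birkhoffProd (continuous_const_mul α) (by fun_prop) L
  simp only [mul_left_iterate] at hL
  have := le_or_le_of_forall_le_or_le_mul hcont.norm (by norm_num) hL z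
  norm_num [hz1] at this

theorem hasBoundedSolutions_mul_of_zpow
    (hα : ∀ n : ℕ, 0 < n → α ^ n ≠ 1) (hlam : lam ≠ 0) {C : ℝ}
    (hsol : ∀ k : ℤ, ∃ f : Circle → ℂ, (∀ z, ‖f z‖ ≤ C) ∧
      ∀ z : Circle, lam * f z - w z * f (α * z) = (z : ℂ) ^ k) :
    HasBoundedSolutions (α * ·) (fun z => lam⁻¹ * w z) (‖lam‖ * C) := by
  refine ⟨_, denseRange_zpow_of_forall_pow_ne_one hα, ?_⟩
  rintro _ ⟨k, rfl⟩
  obtain ⟨f, hfC, hf⟩ := hsol k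
  refine ⟨fun z => lam * (f z * (z : ℂ) ^ (-k)), fun z => ?_, fun z => ?_⟩
  · rw [norm_mul, norm_mul_circle_zpow]
    gcongr
    exact hfC z
  · have hz := z.coe_ne_zero
    have hα0 := α.coe_ne_zero
    simp only [Circle.coe_mul, Circle.coe_zpow, mul_zpow, zpow_neg]
    field_simp
    exact hf z

theorem stmt15_general (hw : Continuous w) (hwne : ∀ z, w z ≠ 0)
    (hα : ∀ n : ℕ, 0 < n → α ^ n ≠ 1) :
    {lam : ℂ | ‖lam‖ =
        Real.exp ((2 * Real.pi)⁻¹ * ∫ θ in (0 : ℝ)..(2 * Real.pi),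
          Real.log ‖w (Circle.exp θ)‖)} ⊆
    {lam : ℂ | ¬ ∃ C, ∀ g ∈ WienerSet, ∃ f ∈ WienerSet,
        (lam • f - fun z => w z * f (α * z)) = g ∧ wienerNorm f ≤ C * wienerNorm g} := by
  rintro lam hlam ⟨C, hC⟩
  have hlam0 : lam ≠ 0 := norm_pos_iff.mp (hlam ▸ Real.exp_pos _)
  refine not_hasBoundedSolutions_mul hw hwne hlam _
    (hasBoundedSolutions_mul_of_zpow hα hlam0 (C := C) fun k => ?_)
  obtain ⟨f, hf, hfk, hfC⟩ := hC _ (zpow_mem_wienerSet k)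
  rw [wienerNorm_zpow, mul_one] at hfC
  exact ⟨f, fun z => (norm_apply_le_wienerNorm hf z).trans hfC, congrFun hfk⟩

end WeightedRotation

/-- For the Wiener algebra `A` of absolutely convergent Fourier series on `𝕋`, an
invertible weight `w ∈ A`, and a rotation `z ↦ α z` with `α` not a root of unity, the
spectrum of `(Tf)(z) = w(z) f(α z)` on `A` contains the circle of radius
`c = exp((1/2π) ∫₀^{2π} ln |w(e^{iθ})| dθ)`. -/
theorem stmt15 (w : Circle → ℂ) (hw : w ∈ WienerSet) (hwne : ∀ z, w z ≠ 0)
    (hwinv : (fun z => (w z)⁻¹) ∈ WienerSet)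
    (α : Circle) (hα : ∀ n : ℕ, 0 < n → α ^ n ≠ 1) :
    {lam : ℂ | ‖lam‖ =
        Real.exp ((2 * Real.pi)⁻¹ * ∫ θ in (0:ℝ)..(2 * Real.pi),
          Real.log ‖w (Circle.exp θ)‖)} ⊆
    {lam : ℂ | ¬ InResolvent WienerSet wienerNorm
        (fun f => fun z => w z * f (α * z)) lam} :=
  fun _ hlam ⟨_, _, C, _, hC⟩ =>
    stmt15_general (continuous_of_mem_wienerSet hw) hwne hα hlam ⟨C, hC⟩
end
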